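/- arXiv:1511.05906 — 4 statements merged into one kernel-verified Lean document; each statement's English description precedes it below -/
import Mathlib

section
/- Let (X, 𝒜, ν, T) be a non-singular dynamical system on a σ-finite measure space with ℐ = 𝒯 (mod ν), where ℐ is the invariant σ-algebra and 𝒯 the tail σ-algebra. Then for every A ∈ 𝒜 with ν(A) > 0 and every ℓ ∈ ℤ⁺ there exists n = n(A, ℓ) ∈ ℕ such that ν(T^{k+j}A ∩ T^k A) > 0 whenever k ≥ n and 1 ≤ j ≤ ℓ. -/
open MeasureTheory Set Filter

/-- `A` belongs to the tail σ-algebra `𝒯 = ⋂ₙ T⁻ⁿ 𝒜`: for every `n`, `A` is the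
`n`-fold preimage of some measurable set. -/
def IsTailSet {X : Type*} [MeasurableSpace X] (T : X → X) (A : Set X) : Prop :=
  ∀ n : ℕ, ∃ B : Set X, MeasurableSet B ∧ A = T^[n] ⁻¹' B

/-- `A` belongs to the invariant σ-algebra `ℐ`: `A` is measurable and
`T⁻¹ A = A` mod `ν`. -/
def IsInvModNu {X : Type*} [MeasurableSpace X] (ν : Measure X) (T : X → X)
    (A : Set X) : Prop :=
  MeasurableSet A ∧ ν (symmDiff (T ⁻¹' A) A) = 0

/-!
The set `S` of points `x` with `T^[k] x ∈ T^[k] '' A` for some `k` is a tail set containing `A`.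
If tail sets are invariant mod `ν`, then almost every point of `A` lies in
`T^[j] ⁻¹' S = ⋃ k, T^[k + j] ⁻¹' (T^[k] '' A)`, so `A ∩ T^[k + j] ⁻¹' (T^[k] '' A)` has positive
measure for some `k`. The image of this set under `T^[k + j]` is `T^[k + j] '' A ∩ T^[k] '' A`, and
non-singularity keeps images of sets of positive measure of positive measure. For the same reason
positivity passes from `k` to every larger index.
-/

section TailSaturation

variable {X : Type*}

/-- The saturation of `A` under the tail equivalence relation of `T`, for which `x` and `y` are
equivalent when `T^[k] x = T^[k] y` for some `k`. It is the smallest set that contains `A` and is,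
for every `n`, an `n`-fold preimage. -/
def tailSaturation (T : X → X) (A : Set X) : Set X :=
  ⋃ k : ℕ, T^[k] ⁻¹' (T^[k] '' A)

theorem subset_tailSaturation (T : X → X) (A : Set X) : A ⊆ tailSaturation T A :=
  (subset_preimage_image T^[0] A).trans
    (subset_iUnion (fun k : ℕ => T^[k] ⁻¹' (T^[k] '' A)) 0)

theorem preimage_iterate_tailSaturation (T : X → X) (A : Set X) (n : ℕ) :
    T^[n] ⁻¹' tailSaturation T A = ⋃ k : ℕ, T^[k + n] ⁻¹' (T^[k] '' A) := by
  simp only [tailSaturation, preimage_iUnion, ← preimage_comp, ← Function.iterate_add]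

theorem preimage_iterate_tailSaturation_image (T : X → X) (A : Set X) (n : ℕ) :
    T^[n] ⁻¹' tailSaturation T (T^[n] '' A) = tailSaturation T A := by
  have hmono : Monotone fun k : ℕ => T^[k] ⁻¹' (T^[k] '' A) := by
    refine monotone_nat_of_le_succ fun k x hx => ?_
    rw [Function.iterate_succ', image_comp, preimage_comp]
    exact mem_image_of_mem T hx
  rw [preimage_iterate_tailSaturation]
  simp only [← image_comp, ← Function.iterate_add]
  exact hmono.iUnion_nat_add n

variable [MeasurableSpace X] {T : X → X} {A : Set X}

theorem measurableSet_image_iterate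
    (hTimg : ∀ B : Set X, MeasurableSet B → MeasurableSet (T '' B))
    (hA : MeasurableSet A) (n : ℕ) : MeasurableSet (T^[n] '' A) := by
  induction n with
  | zero => simpa using hA
  | succ n ih =>
    rw [Function.iterate_succ', image_comp]
    exact hTimg _ ih

theorem measurableSet_tailSaturation (hTmeas : Measurable T)
    (hTimg : ∀ B : Set X, MeasurableSet B → MeasurableSet (T '' B))
    (hA : MeasurableSet A) : MeasurableSet (tailSaturation T A) :=
  MeasurableSet.iUnion fun k => hTmeas.iterate k (measurableSet_image_iterate hTimg hA k)

theorem isTailSet_tailSaturation (hTmeas : Measurable T)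
    (hTimg : ∀ B : Set X, MeasurableSet B → MeasurableSet (T '' B))
    (hA : MeasurableSet A) : IsTailSet T (tailSaturation T A) := fun n =>
  ⟨tailSaturation T (T^[n] '' A),
    measurableSet_tailSaturation hTmeas hTimg (measurableSet_image_iterate hTimg hA n),
    (preimage_iterate_tailSaturation_image T A n).symm⟩

end TailSaturation

theorem quasiMeasurePreserving_of_preimage_null {X Y : Type*} [MeasurableSpace X]
    [MeasurableSpace Y] {μ : Measure X} {ν : Measure Y} {f : X → Y} (hf : Measurable f)
    (hnull : ∀ B : Set Y, MeasurableSet B → ν B = 0 → μ (f ⁻¹' B) = 0) :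
    Measure.QuasiMeasurePreserving f μ ν :=
  ⟨hf, .mk fun B hB hνB => by rw [Measure.map_apply hf hB, hnull B hB hνB]⟩

theorem measure_image_pos {X Y : Type*} [MeasurableSpace X] [MeasurableSpace Y] {μ : Measure X}
    {ν : Measure Y} {f : X → Y} (hf : Measure.QuasiMeasurePreserving f μ ν) {s : Set X}
    (hs : 0 < μ s) : 0 < ν (f '' s) :=
  pos_iff_ne_zero.2 fun hnull =>
    hs.ne' (measure_mono_null (subset_preimage_image f s) (hf.preimage_null hnull))

section ImageIntersections

variable {X : Type*} [MeasurableSpace X] {ν : Measure X} {T : X → X} {A : Set X}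

theorem measure_image_iterate_inter_pos_of_le (hT : Measure.QuasiMeasurePreserving T ν ν)
    {j k m : ℕ} (hkm : k ≤ m) (hk : 0 < ν (T^[k + j] '' A ∩ T^[k] '' A)) :
    0 < ν (T^[m + j] '' A ∩ T^[m] '' A) := by
  obtain ⟨i, rfl⟩ := Nat.exists_eq_add_of_le' hkm
  calc
    0 < ν (T^[i] '' (T^[k + j] '' A ∩ T^[k] '' A)) := measure_image_pos (hT.iterate i) hk
    _ ≤ ν (T^[i] '' (T^[k + j] '' A) ∩ T^[i] '' (T^[k] '' A)) :=
      measure_mono (image_inter_subset _ _ _)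
    _ = ν (T^[i + k + j] '' A ∩ T^[i + k] '' A) := by
      simp only [← image_comp, ← Function.iterate_add, add_assoc]

theorem exists_measure_image_iterate_inter_pos (hT : Measure.QuasiMeasurePreserving T ν ν)
    (hinv : T ⁻¹' tailSaturation T A =ᵐ[ν] tailSaturation T A) (hA : 0 < ν A) (j : ℕ) :
    ∃ k : ℕ, 0 < ν (T^[k + j] '' A ∩ T^[k] '' A) := by
  have hunion : ν (⋃ k : ℕ, A ∩ T^[k + j] ⁻¹' (T^[k] '' A)) = ν A := by
    rw [← inter_iUnion, ← preimage_iterate_tailSaturation]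
    calc
      ν (A ∩ T^[j] ⁻¹' tailSaturation T A) = ν (A ∩ tailSaturation T A) :=
        measure_congr ((ae_eq_refl A).inter (hT.preimage_iterate_ae_eq j hinv))
      _ = ν A := by rw [inter_eq_left.2 (subset_tailSaturation T A)]
  obtain ⟨k, hk⟩ := exists_measure_pos_of_not_measure_iUnion_null (hunion ▸ hA.ne')
  refine ⟨k, ?_⟩
  rw [← image_inter_preimage]
  exact measure_image_pos (hT.iterate (k + j)) hk

theorem eventually_measure_image_iterate_inter_pos (hT : Measure.QuasiMeasurePreserving T ν ν)
    (hinv : T ⁻¹' tailSaturation T A =ᵐ[ν] tailSaturation T A) (hA : 0 < ν A) (j : ℕ) :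
    ∀ᶠ k in atTop, 0 < ν (T^[k + j] '' A ∩ T^[k] '' A) := by
  obtain ⟨k, hk⟩ := exists_measure_image_iterate_inter_pos hT hinv hA j
  filter_upwards [eventually_ge_atTop k] with m hkm
  exact measure_image_iterate_inter_pos_of_le hT hkm hk

end ImageIntersections

theorem intersecting_all_gaps_of_inv_eq_tail_general
    {X : Type*} [MeasurableSpace X] {ν : Measure X} {T : X → X}
    (hT : Measure.QuasiMeasurePreserving T ν ν)
    (hTimg : ∀ A : Set X, MeasurableSet A → MeasurableSet (T '' A))
    (htail : ∀ A : Set X, IsTailSet T A → T ⁻¹' A =ᵐ[ν] A)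
    {A : Set X} (hA : MeasurableSet A) (hpos : 0 < ν A) (ℓ : ℕ) :
    ∃ n : ℕ, ∀ k : ℕ, n ≤ k → ∀ j : ℕ, j ≤ ℓ → 0 < ν (T^[k + j] '' A ∩ T^[k] '' A) := by
  have hinv := htail _ (isTailSet_tailSaturation hT.measurable hTimg hA)
  exact eventually_atTop.1 ((eventually_all_finite (finite_Iic ℓ)).2 fun j _ =>
    eventually_measure_image_iterate_inter_pos hT hinv hpos j)

/-- if the invariant and tail σ-algebras coincide mod `ν`, then for every
measurable `A` with `ν A > 0` and every `ℓ ≥ 1` there is `n` such that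
`ν(T^{k+j} A ∩ T^k A) > 0` whenever `k ≥ n` and `1 ≤ j ≤ ℓ`. -/
theorem intersecting_all_gaps_of_inv_eq_tail
    {X : Type*} [MeasurableSpace X] (ν : Measure X) [SigmaFinite ν] (T : X → X)
    (hTmeas : Measurable T)
    (hTimg : ∀ A : Set X, MeasurableSet A → MeasurableSet (T '' A))
    (hTsurj : Function.Surjective T)
    (hns : ∀ A : Set X, MeasurableSet A → ν A = 0 → ν (T ⁻¹' A) = 0)
    (heq₁ : ∀ A : Set X, IsTailSet T A → ν (symmDiff (T ⁻¹' A) A) = 0)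
    (heq₂ : ∀ A : Set X, IsInvModNu ν T A →
      ∃ B : Set X, IsTailSet T B ∧ ν (symmDiff A B) = 0) :
    ∀ A : Set X, MeasurableSet A → 0 < ν A → ∀ ℓ : ℕ, 1 ≤ ℓ →
      ∃ n : ℕ, ∀ k : ℕ, n ≤ k → ∀ j : ℕ, 1 ≤ j → j ≤ ℓ →
        0 < ν (T^[k + j] '' A ∩ T^[k] '' A) := by
  intro A hA hpos ℓ _
  exact (intersecting_all_gaps_of_inv_eq_tail_general
    (quasiMeasurePreserving_of_preimage_null hTmeas hns) hTimg
    (fun B hB => measure_symmDiff_eq_zero_iff.1 (heq₁ B hB)) hA hpos ℓ).imp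
      fun _ hn k hk j _ => hn k hk j
end

section
/- (Distortion Lemma) Let T satisfy (A1)–(A4) and let the refined Markov partition P_o and its cylinders be as defined. There exists D > 1 such that for every n ∈ ℕ, every index string j^{n+1} = (j_0, ..., j_n) ∈ (ℤ⁻ ∪ {1,2,...})^{n+1} with Leb(I_{j^{n+1}}) > 0 and at least one component j_k > 0, and every Borel set B ⊆ I_{j^{n+1}}, one has: (i) T^n B ⊆ I_{j_n}; (ii) Leb(T^n B)/Leb(I_{j_n}) ≤ D · Leb(B)/Leb(I_{j^{n+1}}); (iii) Leb(T^{n+1} B) ≤ D · Leb(B)/Leb(I_{j^{n+1}}). -/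
open MeasureTheory Set Filter

/-- An interval map `T : [0,1] → [0,1]` which is Markov with respect to the
partition `{[a_j, a_{j+1}]}` given by the strictly increasing sequence
`0 = a_0 < a_1 < ⋯` with supremum `1`, satisfying hypotheses (A1)–(A4).
The branch extensions are `φ j`, with first and second derivatives
`φd j` and `φdd j` (taken within `[a_j, a_{j+1}]`). -/
structure IntervalMapSetup where
  T : ℝ → ℝ
  a : ℕ → ℝ
  φ : ℕ → ℝ → ℝ
  φd : ℕ → ℝ → ℝ
  φdd : ℕ → ℝ → ℝ
  Λ : ℝ
  K : ℝ
  β : ℝ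
  c₁ : ℝ
  c₂ : ℝ
  ha0 : a 0 = 0
  ha_mono : StrictMono a
  ha_lt : ∀ j, a j < 1
  ha_lim : Tendsto a atTop (nhds 1)
  hT_maps : MapsTo T (Icc 0 1) (Icc 0 1)
  -- `T` coincides with the branch `φ j` on the open interval `(a_j, a_{j+1})`
  hT_eq : ∀ j, ∀ x ∈ Ioo (a j) (a (j+1)), T x = φ j x
  -- (A1): each branch is a bijection onto `[0,1]`, `C²` up to the boundary
  hφ_bij : ∀ j, BijOn (φ j) (Icc (a j) (a (j+1))) (Icc 0 1)
  hφ_d : ∀ j, ∀ x ∈ Icc (a j) (a (j+1)),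
    HasDerivWithinAt (φ j) (φd j x) (Icc (a j) (a (j+1))) x
  hφ_dd : ∀ j, ∀ x ∈ Icc (a j) (a (j+1)),
    HasDerivWithinAt (φd j) (φdd j x) (Icc (a j) (a (j+1))) x
  hφdd_cont : ∀ j, ContinuousOn (φdd j) (Icc (a j) (a (j+1)))
  -- (A2): uniform expansion on branches `j ≥ 1`
  hΛ : 1 < Λ
  hA2 : ∀ j, 1 ≤ j → ∀ x ∈ Icc (a j) (a (j+1)), Λ ≤ |φd j x|
  -- (A3): distortion bound
  hK : 0 < K
  hA3 : ∀ j, ∀ x ∈ Icc (a j) (a (j+1)), |φdd j x| / (φd j x) ^ 2 ≤ K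
  -- (A4): indifferent fixed point at 0
  hβ : 0 ≤ β
  hc₁ : 0 < c₁
  hc₁₂ : c₁ < c₂
  hA4_conv : ConvexOn ℝ (Icc (a 0) (a 1)) (φ 0)
  hA4_fix : φ 0 0 = 0
  hA4_d1 : φd 0 0 = 1
  hA4_exp : ∀ x : ℝ, 0 < x → x ≤ a 1 → 1 < φd 0 x
  hA4_dd : ∀ x ∈ Ioo (0:ℝ) (a 1), c₁ * x ^ β ≤ φdd 0 x ∧ φdd 0 x ≤ c₂ * x ^ β

/-- The element of the refined Markov partition `P_o` with index `j ∈ ℤ⁻ ∪ {1,2,…}`: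
for `j ≥ 1` it is `I_j = [a_j, a_{j+1}]`, and for `j = -k < 0` it is
`I_{-k} = [b_k, b_{k-1}]`, where `(b_k)` is the backward orbit of `a_1` in `I_0`. -/
def refIo (S : IntervalMapSetup) (b : ℕ → ℝ) (j : ℤ) : Set ℝ :=
  if 1 ≤ j then Set.Icc (S.a j.toNat) (S.a (j.toNat + 1))
  else Set.Icc (b (-j).toNat) (b ((-j).toNat - 1))

/-- The cylinder `I_{(j_0, …, j_{n-1})} = I_{j_0} ∩ T⁻¹ I_{j_1} ∩ ⋯ ∩ T^{-(n-1)} I_{j_{n-1}}`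
of the refined partition. -/
def cylSet (S : IntervalMapSetup) (b : ℕ → ℝ) (n : ℕ) (js : ℕ → ℤ) : Set ℝ :=
  ⋂ k ∈ Finset.range n, S.T^[k] ⁻¹' refIo S b (js k)

/-!
By (A3) the logarithm of `|T'|` varies on each branch at most `K` times as fast as `T`, so the
logarithms of `|(T^n)'|` at two points `x`, `y` of a cylinder differ by at most
`K * ∑ i < n, |T^(i+1) x - T^(i+1) y|`, and everything rests on a bound for this sum which is
uniform in the cylinder. Near the indifferent fixed point there is no uniform expansion. However,
as `T` is convex on `I_0`, its slopes on `I_{-k}` are at least the mean slope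
`Leb(I_{-k}) / Leb(I_{-k-1})` on the next deeper element. Along an excursion near `0` the distances
of two points thus grow at least as fast as the lengths of the elements, whose sum is at most `1`.
To concatenate excursions, give the elements weights `w_j` such that
`(w_j + 1) |x - y| ≤ w_{j'} |T x - T y|` whenever `x, y ∈ I_j` and `T x ∈ I_{j'}`, so that the sum
telescopes: on `I_{-k}` the weight is the ratio `b_{k+1} / Leb(I_{-k-1})` plus a constant that is
regained from the expansion by `Λ` on the elements of positive index. Bounded distortion of `T^n`
turns into the claim by the change of variables formula, since the endpoints of the elements
contribute only countably many points.
-/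

/-! ### Distortion of real functions -/

theorem exists_abs_sub_mul_abs_deriv_eq {f g f' g' : ℝ → ℝ} {s : Set ℝ}
    (hs : s.OrdConnected) (hf : ∀ x ∈ s, HasDerivWithinAt f (f' x) s x)
    (hg : ∀ x ∈ s, HasDerivWithinAt g (g' x) s x) {x y : ℝ} (hx : x ∈ s) (hy : y ∈ s) :
    ∃ c ∈ s, |g x - g y| * |f' c| = |f x - f y| * |g' c| := by
  rcases eq_or_ne x y with rfl | hxy
  · exact ⟨x, hx, by simp⟩
  wlog h : y < x generalizing x y
  · simpa only [abs_sub_comm] using this hy hx hxy.symm (hxy.lt_of_le (not_lt.1 h))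
  have hsub : Icc y x ⊆ s := hs.out hy hx
  have hnhds : ∀ c ∈ Ioo y x, s ∈ nhds c := fun c hc ↦
    Filter.mem_of_superset (Icc_mem_nhds hc.1 hc.2) hsub
  obtain ⟨c, hc, hfg⟩ := exists_ratio_hasDerivAt_eq_ratio_slope f f' h
    (fun z hz ↦ ((hf z (hsub hz)).continuousWithinAt).mono hsub)
    (fun z hz ↦ (hf z (hsub (Ioo_subset_Icc_self hz))).hasDerivAt (hnhds z hz)) g g'
    (fun z hz ↦ ((hg z (hsub hz)).continuousWithinAt).mono hsub)
    (fun z hz ↦ (hg z (hsub (Ioo_subset_Icc_self hz))).hasDerivAt (hnhds z hz))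
  exact ⟨c, hsub (Ioo_subset_Icc_self hc), by rw [← abs_mul, ← abs_mul, hfg]⟩

theorem mul_abs_sub_le_abs_image_sub {f f' : ℝ → ℝ} {s : Set ℝ} (hs : s.OrdConnected)
    (hf : ∀ x ∈ s, HasDerivWithinAt f (f' x) s x) {c : ℝ} (hc : ∀ x ∈ s, c ≤ |f' x|) {x y : ℝ}
    (hx : x ∈ s) (hy : y ∈ s) : c * |x - y| ≤ |f x - f y| := by
  obtain ⟨z, hz, h⟩ := exists_abs_sub_mul_abs_deriv_eq hs hf
    (fun x _ ↦ hasDerivWithinAt_id x s) hx hy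
  calc c * |x - y| ≤ |f' z| * |x - y| := by gcongr; exact hc z hz
    _ = |f x - f y| := by simpa [mul_comm] using h

theorem abs_deriv_le_exp_mul_abs_deriv {f f' f'' : ℝ → ℝ} {s : Set ℝ} (hs : s.OrdConnected)
    (hf : ∀ x ∈ s, HasDerivWithinAt f (f' x) s x)
    (hf' : ∀ x ∈ s, HasDerivWithinAt f' (f'' x) s x) (h0 : ∀ x ∈ s, f' x ≠ 0) {K : ℝ}
    (hK : ∀ x ∈ s, |f'' x| / f' x ^ 2 ≤ K) {x y : ℝ} (hx : x ∈ s) (hy : y ∈ s) :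
    |f' x| ≤ Real.exp (K * |f x - f y|) * |f' y| := by
  obtain ⟨c, hc, hratio⟩ := exists_abs_sub_mul_abs_deriv_eq hs hf
    (fun z hz ↦ (hf' z hz).log (h0 z hz)) hx hy
  have hpos : 0 < |f' c| := abs_pos.2 (h0 c hc)
  have hlog : |Real.log (f' x) - Real.log (f' y)| ≤ K * |f x - f y| := by
    calc |Real.log (f' x) - Real.log (f' y)|
        = |f x - f y| * (|f'' c| / f' c ^ 2) := by
          rw [eq_div_of_mul_eq hpos.ne' hratio, abs_div, ← sq_abs (f' c)]
          field_simp
      _ ≤ K * |f x - f y| := by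
          rw [mul_comm]; gcongr; exact hK c hc
  calc |f' x| = Real.exp (Real.log (f' x)) := (Real.exp_log_eq_abs (h0 x hx)).symm
    _ ≤ Real.exp (K * |f x - f y| + Real.log (f' y)) := by
        gcongr; linarith [le_abs_self (Real.log (f' x) - Real.log (f' y))]
    _ = Real.exp (K * |f x - f y|) * |f' y| := by rw [Real.exp_add, Real.exp_log_eq_abs (h0 y hy)]

theorem image_sub_mul_sub_le_of_convexOn {f : ℝ → ℝ} {s : Set ℝ} (hf : ConvexOn ℝ s f)
    {u v x y : ℝ} (hu : u ∈ s) (hy : y ∈ s) (huv : u < v) (hvx : v ≤ x) (hxy : x ≤ y) :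
    (f v - f u) * (y - x) ≤ (f y - f x) * (v - u) := by
  rcases hxy.eq_or_lt with rfl | hxy
  · simp
  have hx : x ∈ s := hf.1.ordConnected.out hu hy ⟨huv.le.trans hvx, hxy.le⟩
  rw [← div_le_div_iff₀ (sub_pos.2 huv) (sub_pos.2 hxy)]
  rcases hvx.eq_or_lt with rfl | hvx
  · exact hf.slope_mono_adjacent hu hy huv hxy
  · have hv : v ∈ s := hf.1.ordConnected.out hu hx ⟨huv.le, hvx.le⟩
    exact (hf.slope_mono_adjacent hu hx huv hvx).trans (hf.slope_mono_adjacent hv hy hvx hxy)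

theorem sum_range_le_mul_of_add_one_mul_le {d w : ℕ → ℝ} (h0 : 0 ≤ w 0 * d 0) {n : ℕ}
    (h : ∀ i < n, (w i + 1) * d i ≤ w (i + 1) * d (i + 1)) :
    ∑ i ∈ Finset.range n, d i ≤ w n * d n := by
  induction n with
  | zero => simpa using h0
  | succ n ih =>
    rw [Finset.sum_range_succ]
    linarith [ih fun i hi ↦ h i (by omega), h n (by omega)]

theorem volume_image_mul_volume_le {f f' : ℝ → ℝ} {s t : Set ℝ} (hs : MeasurableSet s)
    (hf : ∀ x ∈ s, HasDerivWithinAt f (f' x) s x) (hinj : InjOn f s) {C : ℝ} (hC : 0 ≤ C)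
    (hf' : ∀ x ∈ s, ∀ y ∈ s, |f' x| ≤ C * |f' y|) (hts : t ⊆ s) :
    volume (f '' t) * volume s ≤ ENNReal.ofReal C * (volume t * volume (f '' s)) := by
  wlog ht : MeasurableSet t generalizing t
  · calc volume (f '' t) * volume s
        ≤ volume (f '' (toMeasurable volume t ∩ s)) * volume s := by
          gcongr; exact subset_inter (subset_toMeasurable volume t) hts
      _ ≤ ENNReal.ofReal C * (volume (toMeasurable volume t ∩ s) * volume (f '' s)) :=
          this inter_subset_right ((measurableSet_toMeasurable volume t).inter hs)
      _ ≤ ENNReal.ofReal C * (volume t * volume (f '' s)) := by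
          rw [← measure_toMeasurable t]; gcongr; exact inter_subset_left
  have hvol : ∀ r ⊆ s, MeasurableSet r →
      volume (f '' r) = ∫⁻ x in r, ENNReal.ofReal |f' x| := fun r hr hrm ↦ by
    simpa using lintegral_image_eq_lintegral_abs_deriv_mul hrm
      (fun x hx ↦ (hf x (hr hx)).mono hr) (hinj.mono hr) 1
  have hpoint : ∀ x ∈ t,
      ENNReal.ofReal |f' x| * volume s ≤ ENNReal.ofReal C * volume (f '' s) := fun x hx ↦ by
    rw [hvol s subset_rfl hs, ← setLIntegral_const,
      ← lintegral_const_mul' _ _ ENNReal.ofReal_ne_top]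
    refine setLIntegral_mono' hs fun y hy ↦ ?_
    rw [← ENNReal.ofReal_mul hC]
    exact ENNReal.ofReal_le_ofReal (hf' x (hts hx) y hy)
  calc volume (f '' t) * volume s
      ≤ ∫⁻ x in t, ENNReal.ofReal |f' x| * volume s := by
        rw [hvol t hts ht]; exact lintegral_mul_const_le _ _
    _ ≤ ∫⁻ _ in t, ENNReal.ofReal C * volume (f '' s) := setLIntegral_mono' ht hpoint
    _ = ENNReal.ofReal C * (volume t * volume (f '' s)) := by rw [setLIntegral_const]; ring

theorem volume_image_inter_eq_of_countable_diff {f : ℝ → ℝ} {s t u : Set ℝ}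
    (hsu : (u \ s).Countable) (htu : t ⊆ u) : volume (f '' (t ∩ s)) = volume (f '' t) := by
  refine measure_eq_measure_of_null_sdiff (image_mono inter_subset_left) ?_
  refine (((hsu.mono (sdiff_subset_sdiff_left htu)).image f).mono ?_).measure_zero volume
  rintro _ ⟨⟨x, hx, rfl⟩, hxs⟩
  exact ⟨x, ⟨hx, fun h ↦ hxs ⟨x, ⟨hx, h⟩, rfl⟩⟩, rfl⟩

theorem div_le_mul_div_of_mul_le_mul {A B D I V : ENNReal} (h : A * V ≤ D * (B * I)) (hV : V ≠ 0)
    (hV' : V ≠ ⊤) (hI : I ≠ 0) (hI' : I ≠ ⊤) : A / I ≤ D * (B / V) := by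
  rw [ENNReal.div_le_iff hI hI', mul_assoc, ← ENNReal.mul_div_right_comm, ← mul_div_assoc,
    ENNReal.le_div_iff_mul_le (.inl hV) (.inl hV')]
  exact h

/-! ### Expansion near the indifferent fixed point -/

/-- The standing assumptions on the sequence `b` that cuts `I_0` into the elements `I_{-k}` of the
refined partition: it is a backward orbit of `a_1` under `T`, decreasing inside `(0, a_1]`. -/
structure IsBackwardOrbit (S : IntervalMapSetup) (b : ℕ → ℝ) : Prop where
  zero : b 0 = S.a 1
  pos : ∀ k, 0 < b (k + 1)
  lt : ∀ k, b (k + 1) < b k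
  map_succ : ∀ k, S.T (b (k + 1)) = b k

namespace IntervalMapSetup

variable (S : IntervalMapSetup) {b : ℕ → ℝ} {j : ℕ} {x y : ℝ}

theorem a_nonneg (j : ℕ) : 0 ≤ S.a j :=
  S.ha0 ▸ S.ha_mono.monotone (Nat.zero_le j)

theorem hasDerivAt_T (hx : x ∈ Ioo (S.a j) (S.a (j + 1))) : HasDerivAt S.T (S.φd j x) x := by
  have hφ : HasDerivAt (S.φ j) (S.φd j x) x :=
    (S.hφ_d j x (Ioo_subset_Icc_self hx)).hasDerivAt (Icc_mem_nhds hx.1 hx.2)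
  exact hφ.congr_of_eventuallyEq (mem_of_superset (Ioo_mem_nhds hx.1 hx.2) (S.hT_eq j))

theorem one_lt_φd_zero (hx : x ∈ Ioo (S.a 0) (S.a 1)) : 1 < S.φd 0 x :=
  S.hA4_exp x (S.ha0 ▸ hx.1) hx.2.le

theorem one_le_abs_φd (hx : x ∈ Ioo (S.a j) (S.a (j + 1))) : 1 ≤ |S.φd j x| := by
  cases j with
  | zero => exact (S.one_lt_φd_zero hx).le.trans (le_abs_self _)
  | succ j => exact S.hΛ.le.trans (S.hA2 _ (by omega) x (Ioo_subset_Icc_self hx))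

theorem abs_φd_le_exp_mul_abs_φd (hx : x ∈ Ioo (S.a j) (S.a (j + 1)))
    (hy : y ∈ Ioo (S.a j) (S.a (j + 1))) :
    |S.φd j x| ≤ Real.exp (S.K * |S.T x - S.T y|) * |S.φd j y| :=
  abs_deriv_le_exp_mul_abs_deriv ordConnected_Ioo
    (fun _ hz ↦ (S.hasDerivAt_T hz).hasDerivWithinAt)
    (fun z hz ↦ (S.hφ_dd j z (Ioo_subset_Icc_self hz)).mono Ioo_subset_Icc_self)
    (fun _ hz ↦ abs_pos.1 (one_pos.trans_le (S.one_le_abs_φd hz)))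
    (fun z hz ↦ S.hA3 j z (Ioo_subset_Icc_self hz)) hx hy

theorem abs_sub_le_abs_T_sub (hx : x ∈ Ioo (S.a j) (S.a (j + 1)))
    (hy : y ∈ Ioo (S.a j) (S.a (j + 1))) : |x - y| ≤ |S.T x - S.T y| := by
  simpa using mul_abs_sub_le_abs_image_sub ordConnected_Ioo
    (fun _ hz ↦ (S.hasDerivAt_T hz).hasDerivWithinAt) (fun _ hz ↦ S.one_le_abs_φd hz) hx hy

theorem Λ_mul_abs_sub_le_abs_T_sub (hj : 1 ≤ j) (hx : x ∈ Ioo (S.a j) (S.a (j + 1)))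
    (hy : y ∈ Ioo (S.a j) (S.a (j + 1))) : S.Λ * |x - y| ≤ |S.T x - S.T y| :=
  mul_abs_sub_le_abs_image_sub ordConnected_Ioo
    (fun _ hz ↦ (S.hasDerivAt_T hz).hasDerivWithinAt)
    (fun z hz ↦ S.hA2 j hj z (Ioo_subset_Icc_self hz)) hx hy

theorem strictMonoOn_T : StrictMonoOn S.T (Ioo (S.a 0) (S.a 1)) := by
  refine strictMonoOn_of_hasDerivWithinAt_pos (f' := S.φd 0) (convex_Ioo _ _)
    (fun z hz ↦ (S.hasDerivAt_T hz).continuousAt.continuousWithinAt) ?_ ?_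
  all_goals rw [interior_Ioo]; intro z hz
  · exact (S.hasDerivAt_T hz).hasDerivWithinAt
  · exact one_pos.trans (S.one_lt_φd_zero hz)

theorem convexOn_T : ConvexOn ℝ (Ioo (S.a 0) (S.a 1)) S.T :=
  (S.hA4_conv.subset Ioo_subset_Icc_self (convex_Ioo _ _)).congr fun z hz ↦ (S.hT_eq 0 z hz).symm

end IntervalMapSetup

namespace IsBackwardOrbit

variable {S : IntervalMapSetup} {b : ℕ → ℝ} (hb : IsBackwardOrbit S b) {x y : ℝ}
include hb

theorem strictAnti : StrictAnti b := strictAnti_nat_of_succ_lt hb.lt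

theorem gap_pos (k : ℕ) : 0 < b k - b (k + 1) := sub_pos.2 (hb.lt k)

theorem le_a_one (k : ℕ) : b k ≤ S.a 1 := hb.zero ▸ hb.strictAnti.antitone (Nat.zero_le k)

theorem le_one (k : ℕ) : b k ≤ 1 := (hb.le_a_one k).trans (S.ha_lt 1).le

theorem succ_mem_Ioo (k : ℕ) : b (k + 1) ∈ Ioo (S.a 0) (S.a 1) :=
  ⟨S.ha0 ▸ hb.pos k, (hb.lt k).trans_le (hb.le_a_one k)⟩

theorem lt_T {k : ℕ} (hx : x ∈ Ioo (S.a 0) (S.a 1)) (h : b (k + 1) < x) : b k < S.T x :=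
  hb.map_succ k ▸ S.strictMonoOn_T (hb.succ_mem_Ioo k) hx h

theorem T_lt {k : ℕ} (hx : x ∈ Ioo (S.a 0) (S.a 1)) (h : x < b (k + 1)) : S.T x < b k :=
  hb.map_succ k ▸ S.strictMonoOn_T hx (hb.succ_mem_Ioo k) h

/- Convexity: the slope of `T` over `[x, y]` is at least its slope over `[b (k + 2), b (k + 1)]`. -/
theorem gap_mul_abs_sub_le (k : ℕ) (hx : x ∈ Ioo (S.a 0) (S.a 1)) (hy : y ∈ Ioo (S.a 0) (S.a 1))
    (hkx : b (k + 1) ≤ x) (hky : b (k + 1) ≤ y) :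
    (b k - b (k + 1)) * |x - y| ≤ |S.T x - S.T y| * (b (k + 1) - b (k + 2)) := by
  wlog hxy : x ≤ y generalizing x y
  · simpa only [abs_sub_comm] using this hy hx hky hkx (le_of_not_ge hxy)
  have hgap := hb.gap_pos (k + 1)
  calc (b k - b (k + 1)) * |x - y|
      = (S.T (b (k + 1)) - S.T (b (k + 2))) * (y - x) := by
        rw [hb.map_succ, hb.map_succ, abs_sub_comm, abs_of_nonneg (sub_nonneg.2 hxy)]
    _ ≤ (S.T y - S.T x) * (b (k + 1) - b (k + 2)) :=
        image_sub_mul_sub_le_of_convexOn S.convexOn_T (hb.succ_mem_Ioo _) hy (hb.lt _) hkx hxy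
    _ ≤ |S.T x - S.T y| * (b (k + 1) - b (k + 2)) := by
        rw [abs_sub_comm]; gcongr; exact le_abs_self _

theorem antitone_gap_ratio : Antitone fun k ↦ (b k - b (k + 1)) / (b (k + 1) - b (k + 2)) := by
  refine antitone_nat_of_succ_le fun k ↦ ?_
  rw [div_le_div_iff₀ (hb.gap_pos _) (hb.gap_pos _)]
  simpa [hb.map_succ, abs_of_pos (hb.gap_pos _)] using
    hb.gap_mul_abs_sub_le (k + 1) (hb.succ_mem_Ioo k) (hb.succ_mem_Ioo (k + 1)) (hb.lt _).le le_rfl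

theorem gap_le_inv_mul_gap (k : ℕ) :
    b k - b (k + 1) ≤ (b 1 - b 2)⁻¹ * (b (k + 1) - b (k + 2)) := by
  have hgap := hb.gap_pos 1
  have hunit : b 0 - b 1 ≤ 1 := by linarith [hb.le_one 0, hb.pos 0]
  rw [← div_le_iff₀ (hb.gap_pos (k + 1))]
  calc (b k - b (k + 1)) / (b (k + 1) - b (k + 2)) ≤ (b 0 - b 1) / (b 1 - b 2) :=
        hb.antitone_gap_ratio (Nat.zero_le k)
    _ ≤ (b 1 - b 2)⁻¹ := by rw [← one_div]; gcongr

end IsBackwardOrbit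

/-- The length of `[0, b_{k+1}]` relative to that of `[b_{k+1}, b_k]`. It bounds the sum of the
distances of two orbits moving up through the elements of negative index, relative to the last of
these distances. -/
noncomputable def tailRatio (b : ℕ → ℝ) (k : ℕ) : ℝ := b (k + 1) / (b k - b (k + 1))

namespace IsBackwardOrbit

variable {S : IntervalMapSetup} {b : ℕ → ℝ} (hb : IsBackwardOrbit S b) {x y : ℝ}
include hb

theorem tailRatio_nonneg (k : ℕ) : 0 ≤ tailRatio b k :=
  div_nonneg (hb.pos k).le (hb.gap_pos k).le

theorem tailRatio_zero_le : tailRatio b 0 ≤ (b 1 - b 2)⁻¹ := by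
  have hgap := hb.gap_pos 1
  have hexp : b 1 - b 2 ≤ b 0 - b 1 := by
    simpa [hb.map_succ, abs_of_pos (hb.gap_pos _)] using
      S.abs_sub_le_abs_T_sub (hb.succ_mem_Ioo 0) (hb.succ_mem_Ioo 1)
  rw [tailRatio, ← one_div]
  gcongr
  exact hb.le_one 1

theorem tailRatio_succ_mul_gap_le (k : ℕ) :
    tailRatio b (k + 1) * (b k - b (k + 1)) ≤ (b 1 - b 2)⁻¹ := by
  have hgap := hb.gap_pos (k + 1)
  have hr : 0 ≤ (b 1 - b 2)⁻¹ := (inv_pos.2 (hb.gap_pos 1)).le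
  calc tailRatio b (k + 1) * (b k - b (k + 1))
      ≤ tailRatio b (k + 1) * ((b 1 - b 2)⁻¹ * (b (k + 1) - b (k + 2))) :=
        mul_le_mul_of_nonneg_left (hb.gap_le_inv_mul_gap k) (hb.tailRatio_nonneg _)
    _ = b (k + 2) * (b 1 - b 2)⁻¹ := by rw [tailRatio]; field_simp
    _ ≤ (b 1 - b 2)⁻¹ := mul_le_of_le_one_left hr (hb.le_one _)

theorem tailRatio_succ_add_one_mul_le (k : ℕ) (hx : x ∈ Ioo (S.a 0) (S.a 1))
    (hy : y ∈ Ioo (S.a 0) (S.a 1)) (hkx : b (k + 1) ≤ x) (hky : b (k + 1) ≤ y) :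
    (tailRatio b (k + 1) + 1) * |x - y| ≤ tailRatio b k * |S.T x - S.T y| := by
  have hgap := hb.gap_pos k
  have hgap' := hb.gap_pos (k + 1)
  have hpos := hb.pos k
  calc (tailRatio b (k + 1) + 1) * |x - y|
      = b (k + 1) * (|x - y| / (b (k + 1) - b (k + 2))) := by
        rw [tailRatio, div_add_one hgap'.ne']; ring
    _ ≤ b (k + 1) * (|S.T x - S.T y| / (b k - b (k + 1))) := by
        gcongr ?_ * ?_
        rw [div_le_div_iff₀ hgap' hgap, mul_comm]
        exact hb.gap_mul_abs_sub_le k hx hy hkx hky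
    _ = tailRatio b k * |S.T x - S.T y| := by rw [tailRatio]; ring

end IsBackwardOrbit

/-! ### Potential on the refined partition -/

theorem refIo_ofNat_succ (S : IntervalMapSetup) (b : ℕ → ℝ) (i : ℕ) :
    refIo S b (.ofNat (i + 1)) = Icc (S.a (i + 1)) (S.a (i + 2)) :=
  if_pos (by simp)

theorem refIo_negSucc (S : IntervalMapSetup) (b : ℕ → ℝ) (k : ℕ) :
    refIo S b (.negSucc k) = Icc (b (k + 1)) (b k) :=
  if_neg (not_le.2 ((Int.negSucc_lt_zero k).trans one_pos))

theorem mem_Ioo_of_mem_interior_negSucc {S : IntervalMapSetup} {b : ℕ → ℝ} {k : ℕ} {x : ℝ}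
    (hx : x ∈ interior (refIo S b (.negSucc k))) :
    x ∈ Ioo (b (k + 1)) (b k) := by rwa [refIo_negSucc, interior_Icc] at hx

namespace IsBackwardOrbit

variable {S : IntervalMapSetup} {b : ℕ → ℝ} {j j' : ℤ} {x y : ℝ}

theorem exists_refIo_eq_Icc (hb : IsBackwardOrbit S b) (hj : j ≠ 0) :
    ∃ l r, 0 ≤ l ∧ l < r ∧ r ≤ 1 ∧ refIo S b j = Icc l r :=
  match j with
  | .ofNat 0 => absurd rfl hj
  | .ofNat (i + 1) =>
    ⟨_, _, S.a_nonneg _, S.ha_mono (Nat.lt_succ_self _), (S.ha_lt _).le, refIo_ofNat_succ S b i⟩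
  | .negSucc k => ⟨_, _, (hb.pos k).le, hb.lt k, hb.le_one k, refIo_negSucc S b k⟩

theorem refIo_subset_Icc (hb : IsBackwardOrbit S b) (hj : j ≠ 0) : refIo S b j ⊆ Icc 0 1 := by
  obtain ⟨l, r, hl, -, hr, h⟩ := hb.exists_refIo_eq_Icc hj
  exact h ▸ Icc_subset_Icc hl hr

theorem volume_refIo_pos (hb : IsBackwardOrbit S b) (hj : j ≠ 0) : 0 < volume (refIo S b j) := by
  obtain ⟨l, r, -, hlr, -, h⟩ := hb.exists_refIo_eq_Icc hj
  simpa [h] using hlr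

theorem countable_refIo_sdiff_interior (hb : IsBackwardOrbit S b) (hj : j ≠ 0) :
    (refIo S b j \ interior (refIo S b j)).Countable := by
  obtain ⟨l, r, -, hlr, -, h⟩ := hb.exists_refIo_eq_Icc hj
  rw [h, interior_Icc, Icc_sdiff_Ioo_same hlr.le]
  exact (toFinite _).countable

theorem interior_refIo_subset_Ioo (hb : IsBackwardOrbit S b) (hj : j ≠ 0) :
    interior (refIo S b j) ⊆ Ioo (S.a j.toNat) (S.a (j.toNat + 1)) := by
  rcases j with (_ | i) | k
  · exact absurd rfl hj
  · rw [refIo_ofNat_succ, interior_Icc]; rfl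
  · rw [refIo_negSucc, interior_Icc]
    exact Ioo_subset_Ioo (S.ha0.trans_le (hb.pos k).le) (hb.le_a_one k)

theorem mem_Ioo_zero_of_mem_interior_negSucc (hb : IsBackwardOrbit S b) {k : ℕ}
    (hx : x ∈ interior (refIo S b (.negSucc k))) : x ∈ Ioo (S.a 0) (S.a 1) :=
  hb.interior_refIo_subset_Ioo (Int.negSucc_ne_zero k) hx

theorem pos_of_T_mem_interior (hb : IsBackwardOrbit S b) (hj' : j' ≠ 0)
    (hx : x ∈ interior (refIo S b (.negSucc 0))) (hTx : S.T x ∈ interior (refIo S b j')) :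
    0 < j' := by
  rcases j' with i | k
  · exact lt_of_le_of_ne (Int.natCast_nonneg i) hj'.symm
  · have hlt := hb.lt_T (hb.mem_Ioo_zero_of_mem_interior_negSucc hx)
      (mem_Ioo_of_mem_interior_negSucc hx).1
    have hle := hb.strictAnti.antitone (Nat.zero_le k)
    exact absurd (mem_Ioo_of_mem_interior_negSucc hTx).2 (hle.trans hlt.le).not_gt

theorem eq_negSucc_of_T_mem_interior (hb : IsBackwardOrbit S b) {k : ℕ} (hj' : j' ≠ 0)
    (hx : x ∈ interior (refIo S b (.negSucc (k + 1)))) (hTx : S.T x ∈ interior (refIo S b j')) :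
    j' = .negSucc k := by
  have hx₀ := hb.mem_Ioo_zero_of_mem_interior_negSucc hx
  have hx' := mem_Ioo_of_mem_interior_negSucc hx
  have hlt := hb.lt_T hx₀ hx'.1
  have hgt := hb.T_lt hx₀ hx'.2
  rcases j' with (_ | i) | m
  · exact absurd rfl hj'
  · have hi := (hb.interior_refIo_subset_Ioo hj' hTx).1
    have hle : S.a 1 ≤ S.a (i + 1) := S.ha_mono.monotone (Nat.le_add_left 1 i)
    exact absurd (hle.trans_lt hi) (hgt.trans_le (hb.le_a_one k)).not_gt
  · have hm := mem_Ioo_of_mem_interior_negSucc hTx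
    have h₁ := hb.strictAnti.lt_iff_gt.1 (hlt.trans hm.2)
    have h₂ := hb.strictAnti.lt_iff_gt.1 (hm.1.trans hgt)
    congr 1; omega

end IsBackwardOrbit

/-- The part of `weight` which is paid back by the expansion on the elements of positive index. It
solves `Λ * weightBase = weightBase + (b 1 - b 2)⁻¹ + 1`. -/
noncomputable def weightBase (S : IntervalMapSetup) (b : ℕ → ℝ) : ℝ :=
  (1 + (b 1 - b 2)⁻¹) / (S.Λ - 1)

/-- The weight of the elements of positive index, and a bound for the weight of any element times
its length. -/
noncomputable def weightMax (S : IntervalMapSetup) (b : ℕ → ℝ) : ℝ :=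
  weightBase S b + (b 1 - b 2)⁻¹

theorem weightMax_add_one (S : IntervalMapSetup) (b : ℕ → ℝ) :
    weightMax S b + 1 = weightBase S b * S.Λ := by
  have hΛ : S.Λ - 1 ≠ 0 := (sub_pos.2 S.hΛ).ne'
  rw [weightMax, weightBase]
  field_simp
  ring

/-- Weights `w_j` of the elements of the refined partition, chosen such that the potential
`w_j * |x - y|` of two points `x`, `y` of the `j`-th element grows by at least `|x - y|` when `T` is
applied. The value at the index `0` is irrelevant. -/
noncomputable def weight (S : IntervalMapSetup) (b : ℕ → ℝ) : ℤ → ℝ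
  | .ofNat _ => weightMax S b
  | .negSucc k => weightBase S b + tailRatio b (k + 1)

namespace IsBackwardOrbit

variable {S : IntervalMapSetup} {b : ℕ → ℝ} (hb : IsBackwardOrbit S b) {j j' : ℤ} {x y : ℝ}
include hb

theorem weightBase_nonneg : 0 ≤ weightBase S b :=
  div_nonneg (add_nonneg zero_le_one (inv_nonneg.2 (hb.gap_pos 1).le)) (sub_nonneg.2 S.hΛ.le)

theorem weightBase_le_weight (j : ℤ) : weightBase S b ≤ weight S b j :=
  match j with
  | .ofNat _ => le_add_of_nonneg_right (inv_nonneg.2 (hb.gap_pos 1).le)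
  | .negSucc k => le_add_of_nonneg_right (hb.tailRatio_nonneg (k + 1))

theorem weight_nonneg (j : ℤ) : 0 ≤ weight S b j :=
  hb.weightBase_nonneg.trans (hb.weightBase_le_weight j)

theorem weightMax_nonneg : 0 ≤ weightMax S b := hb.weight_nonneg 0

theorem weight_mul_abs_sub_le (hj : j ≠ 0) (hx : x ∈ interior (refIo S b j))
    (hy : y ∈ interior (refIo S b j)) : weight S b j * |x - y| ≤ weightMax S b := by
  have hunit : |x - y| ≤ 1 := by
    have hsub := interior_subset.trans (hb.refIo_subset_Icc hj)
    simpa [Real.dist_eq] using Real.dist_le_of_mem_Icc (hsub hx) (hsub hy)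
  rcases j with i | k
  · exact mul_le_of_le_one_right hb.weightMax_nonneg hunit
  · have hx' := mem_Ioo_of_mem_interior_negSucc hx
    have hy' := mem_Ioo_of_mem_interior_negSucc hy
    have hgap : |x - y| ≤ b k - b (k + 1) :=
      Real.dist_le_of_mem_Icc (Ioo_subset_Icc_self hx') (Ioo_subset_Icc_self hy')
    calc (weightBase S b + tailRatio b (k + 1)) * |x - y|
        = weightBase S b * |x - y| + tailRatio b (k + 1) * |x - y| := add_mul _ _ _
      _ ≤ weightBase S b * 1 + tailRatio b (k + 1) * (b k - b (k + 1)) := by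
          gcongr
          · exact hb.weightBase_nonneg
          · exact hb.tailRatio_nonneg _
      _ ≤ weightMax S b := by
          rw [mul_one, weightMax]; gcongr; exact hb.tailRatio_succ_mul_gap_le k

theorem weight_negSucc_add_one_mul_le {k : ℕ} (hx : x ∈ interior (refIo S b (.negSucc k)))
    (hy : y ∈ interior (refIo S b (.negSucc k))) :
    (weight S b (.negSucc k) + 1) * |x - y| ≤
      (weightBase S b + tailRatio b k) * |S.T x - S.T y| := by
  have hx₀ := hb.mem_Ioo_zero_of_mem_interior_negSucc hx
  have hy₀ := hb.mem_Ioo_zero_of_mem_interior_negSucc hy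
  calc (weightBase S b + tailRatio b (k + 1) + 1) * |x - y|
      = weightBase S b * |x - y| + (tailRatio b (k + 1) + 1) * |x - y| := by ring
    _ ≤ weightBase S b * |S.T x - S.T y| + tailRatio b k * |S.T x - S.T y| :=
        add_le_add
          (mul_le_mul_of_nonneg_left (S.abs_sub_le_abs_T_sub hx₀ hy₀) hb.weightBase_nonneg)
          (hb.tailRatio_succ_add_one_mul_le k hx₀ hy₀ (mem_Ioo_of_mem_interior_negSucc hx).1.le
            (mem_Ioo_of_mem_interior_negSucc hy).1.le)
    _ = (weightBase S b + tailRatio b k) * |S.T x - S.T y| := by ring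

theorem weight_add_one_mul_le (hj : j ≠ 0) (hj' : j' ≠ 0) (hx : x ∈ interior (refIo S b j))
    (hy : y ∈ interior (refIo S b j)) (hTx : S.T x ∈ interior (refIo S b j')) :
    (weight S b j + 1) * |x - y| ≤ weight S b j' * |S.T x - S.T y| := by
  rcases j with (_ | i) | (_ | k)
  · exact absurd rfl hj
  · calc (weightMax S b + 1) * |x - y| = weightBase S b * (S.Λ * |x - y|) := by
          rw [weightMax_add_one, mul_assoc]
      _ ≤ weight S b j' * |S.T x - S.T y| :=
          mul_le_mul (hb.weightBase_le_weight j')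
            (S.Λ_mul_abs_sub_le_abs_T_sub (Nat.le_add_left 1 i)
              (hb.interior_refIo_subset_Ioo hj hx) (hb.interior_refIo_subset_Ioo hj hy))
            (mul_nonneg (one_pos.trans S.hΛ).le (abs_nonneg _)) (hb.weight_nonneg j')
  · obtain ⟨i, rfl⟩ := Int.eq_ofNat_of_zero_le (hb.pos_of_T_mem_interior hj' hx hTx).le
    refine (hb.weight_negSucc_add_one_mul_le hx hy).trans ?_
    exact mul_le_mul_of_nonneg_right (add_le_add_right hb.tailRatio_zero_le _) (abs_nonneg _)
  · obtain rfl := hb.eq_negSucc_of_T_mem_interior hj' hx hTx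
    exact hb.weight_negSucc_add_one_mul_le hx hy

end IsBackwardOrbit

/-! ### Distortion on cylinders -/

/-- The cylinder of the interiors of the elements with indices `js 0, …, js (n - 1)`. It differs
from `cylSet` by a countable set, and `T^n` is smooth and injective on it. -/
def openCylSet (S : IntervalMapSetup) (b : ℕ → ℝ) (n : ℕ) (js : ℕ → ℤ) : Set ℝ :=
  ⋂ i ∈ Finset.range n, S.T^[i] ⁻¹' interior (refIo S b (js i))

/-- The derivative of `T^n` on `openCylSet S b n js`, as given by the chain rule. The branch of `T`
on the element of index `j` has the number `j.toNat`, since the elements of negative index lie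
in `I_0`. -/
def iterDeriv (S : IntervalMapSetup) (js : ℕ → ℤ) (n : ℕ) (x : ℝ) : ℝ :=
  ∏ i ∈ Finset.range n, S.φd (js i).toNat (S.T^[i] x)

/-- The distortion constant, which bounds the quotients of derivatives of the iterates of `T` at two
points of a cylinder. The summand `2` accounts for the last two distances of their orbits, which the
weights do not control. -/
noncomputable def distortionConst (S : IntervalMapSetup) (b : ℕ → ℝ) : ℝ :=
  Real.exp (S.K * (weightMax S b + 2))

section Cylinders

variable {S : IntervalMapSetup} {b : ℕ → ℝ} {js : ℕ → ℤ} {m n i : ℕ} {x : ℝ}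

theorem mem_cylSet : x ∈ cylSet S b n js ↔ ∀ i < n, S.T^[i] x ∈ refIo S b (js i) := by
  simp [cylSet]

theorem mem_openCylSet :
    x ∈ openCylSet S b n js ↔ ∀ i < n, S.T^[i] x ∈ interior (refIo S b (js i)) := by
  simp [openCylSet]

theorem openCylSet_anti (h : m ≤ n) : openCylSet S b n js ⊆ openCylSet S b m js :=
  biInter_subset_biInter_left (Finset.range_mono h)

theorem cylSet_anti (h : m ≤ n) : cylSet S b n js ⊆ cylSet S b m js :=
  biInter_subset_biInter_left (Finset.range_mono h)

theorem openCylSet_subset_cylSet : openCylSet S b n js ⊆ cylSet S b n js :=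
  iInter₂_mono fun _ _ ↦ preimage_mono interior_subset

theorem openCylSet_succ : openCylSet S b (n + 1) js =
    openCylSet S b n js ∩ S.T^[n] ⁻¹' interior (refIo S b (js n)) := by
  ext x; simp only [mem_openCylSet, mem_inter_iff, Nat.forall_lt_succ_right, mem_preimage]

end Cylinders

namespace IsBackwardOrbit

variable {S : IntervalMapSetup} {b : ℕ → ℝ} (hb : IsBackwardOrbit S b) {js : ℕ → ℤ} {m n : ℕ}
  {x y : ℝ}
include hb

theorem one_lt_distortionConst : 1 < distortionConst S b :=
  Real.one_lt_exp_iff.2 (mul_pos S.hK (add_pos_of_nonneg_of_pos hb.weightMax_nonneg two_pos))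

theorem cylSet_subset_Icc (hjs : ∀ i < n + 1, js i ≠ 0) : cylSet S b (n + 1) js ⊆ Icc 0 1 :=
  fun _ hx ↦ hb.refIo_subset_Icc (hjs 0 n.succ_pos) (mem_cylSet.1 hx 0 n.succ_pos)

theorem iterate_mem_Icc (hjs : ∀ i < n, js i ≠ 0) (hx : x ∈ cylSet S b n js) {i : ℕ}
    (hi : i < n) : S.T^[i + 1] x ∈ Icc 0 1 := by
  rw [Function.iterate_succ_apply']
  exact S.hT_maps (hb.refIo_subset_Icc (hjs i hi) (mem_cylSet.1 hx i hi))

theorem hasDerivAt_iterate (hjs : ∀ i < n, js i ≠ 0) (hx : x ∈ openCylSet S b n js) :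
    HasDerivAt S.T^[n] (iterDeriv S js n x) x := by
  induction n with
  | zero => simpa [iterDeriv] using hasDerivAt_id x
  | succ n ih =>
    have hn := hb.interior_refIo_subset_Ioo (hjs n n.lt_succ_self)
      (mem_openCylSet.1 hx n n.lt_succ_self)
    rw [Function.iterate_succ', iterDeriv, Finset.prod_range_succ, mul_comm]
    exact (S.hasDerivAt_T hn).comp x
      (ih (fun i hi ↦ hjs i (by omega)) (openCylSet_anti n.le_succ hx))

theorem abs_sub_le_abs_iterate_sub (hjs : ∀ i < n, js i ≠ 0) (hx : x ∈ openCylSet S b n js)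
    (hy : y ∈ openCylSet S b n js) : |x - y| ≤ |S.T^[n] x - S.T^[n] y| := by
  induction n with
  | zero => rfl
  | succ n ih =>
    have hIoo := hb.interior_refIo_subset_Ioo (hjs n n.lt_succ_self)
    refine (ih (fun i hi ↦ hjs i (by omega)) (openCylSet_anti n.le_succ hx)
      (openCylSet_anti n.le_succ hy)).trans ?_
    simpa only [Function.iterate_succ_apply'] using
      S.abs_sub_le_abs_T_sub (hIoo (mem_openCylSet.1 hx n n.lt_succ_self))
        (hIoo (mem_openCylSet.1 hy n n.lt_succ_self))

theorem injOn_iterate (hjs : ∀ i < n, js i ≠ 0) : InjOn S.T^[n] (openCylSet S b n js) :=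
  fun x hx y hy hxy ↦ by
    simpa [hxy, sub_eq_zero] using hb.abs_sub_le_abs_iterate_sub hjs hx hy

theorem isOpen_openCylSet (hjs : ∀ i < n, js i ≠ 0) : IsOpen (openCylSet S b n js) := by
  induction n with
  | zero => simp [openCylSet]
  | succ n ih =>
    have hjs' : ∀ i < n, js i ≠ 0 := fun i hi ↦ hjs i (by omega)
    rw [openCylSet_succ]
    exact ContinuousOn.isOpen_inter_preimage
      (fun x hx ↦ (hb.hasDerivAt_iterate hjs' hx).continuousAt.continuousWithinAt) (ih hjs')
      isOpen_interior

theorem countable_cylSet_sdiff_openCylSet (hjs : ∀ i < n, js i ≠ 0) :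
    (cylSet S b n js \ openCylSet S b n js).Countable := by
  induction n with
  | zero => simp [openCylSet]
  | succ n ih =>
    have hjs' : ∀ i < n, js i ≠ 0 := fun i hi ↦ hjs i (by omega)
    have hnew : (openCylSet S b n js ∩
        S.T^[n] ⁻¹' (refIo S b (js n) \ interior (refIo S b (js n)))).Countable :=
      MapsTo.countable_of_injOn (f := S.T^[n]) (fun _ hx ↦ hx.2)
        ((hb.injOn_iterate hjs').mono inter_subset_left)
        (hb.countable_refIo_sdiff_interior (hjs n n.lt_succ_self))
    refine ((ih hjs').union hnew).mono fun x ⟨hx, hx'⟩ ↦ ?_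
    rw [openCylSet_succ] at hx'
    by_cases hxn : x ∈ openCylSet S b n js
    · exact .inr ⟨hxn, mem_cylSet.1 hx n n.lt_succ_self, fun h ↦ hx' ⟨hxn, h⟩⟩
    · exact .inl ⟨cylSet_anti n.le_succ hx, hxn⟩

theorem sum_abs_iterate_sub_le (hjs : ∀ i < n + 1, js i ≠ 0) (hx : x ∈ openCylSet S b (n + 1) js)
    (hy : y ∈ openCylSet S b (n + 1) js) :
    ∑ i ∈ Finset.range n, |S.T^[i] x - S.T^[i] y| ≤ weightMax S b := by
  rw [mem_openCylSet] at hx hy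
  calc ∑ i ∈ Finset.range n, |S.T^[i] x - S.T^[i] y|
      ≤ weight S b (js n) * |S.T^[n] x - S.T^[n] y| := by
        refine sum_range_le_mul_of_add_one_mul_le (d := fun i ↦ |S.T^[i] x - S.T^[i] y|)
          (w := fun i ↦ weight S b (js i))
          (mul_nonneg (hb.weight_nonneg _) (abs_nonneg _)) fun i hi ↦ ?_
        simp only [Function.iterate_succ_apply']
        exact hb.weight_add_one_mul_le (hjs i (by omega)) (hjs (i + 1) (by omega))
          (hx i (by omega)) (hy i (by omega))
          (Function.iterate_succ_apply' S.T i x ▸ hx (i + 1) (by omega))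
    _ ≤ weightMax S b := hb.weight_mul_abs_sub_le (hjs n (by omega)) (hx n (by omega))
        (hy n (by omega))

theorem sum_abs_iterate_succ_sub_le (hjs : ∀ i < n, js i ≠ 0) (hx : x ∈ openCylSet S b n js)
    (hy : y ∈ openCylSet S b n js) :
    ∑ i ∈ Finset.range n, |S.T^[i + 1] x - S.T^[i + 1] y| ≤ weightMax S b + 2 := by
  cases n with
  | zero => simpa using add_nonneg hb.weightMax_nonneg zero_le_two
  | succ n =>
    have hsum := hb.sum_abs_iterate_sub_le hjs hx hy
    have hn : |S.T^[n] x - S.T^[n] y| ≤ 1 := by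
      have hsub := interior_subset.trans (hb.refIo_subset_Icc (hjs n n.lt_succ_self))
      simpa [Real.dist_eq] using Real.dist_le_of_mem_Icc
        (hsub (mem_openCylSet.1 hx n n.lt_succ_self)) (hsub (mem_openCylSet.1 hy n n.lt_succ_self))
    have hn' : |S.T^[n + 1] x - S.T^[n + 1] y| ≤ 1 := by
      simpa [Real.dist_eq] using Real.dist_le_of_mem_Icc
        (hb.iterate_mem_Icc hjs (openCylSet_subset_cylSet hx) n.lt_succ_self)
        (hb.iterate_mem_Icc hjs (openCylSet_subset_cylSet hy) n.lt_succ_self)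
    calc ∑ i ∈ Finset.range (n + 1), |S.T^[i + 1] x - S.T^[i + 1] y|
        ≤ ∑ i ∈ Finset.range (n + 2), |S.T^[i] x - S.T^[i] y| := by
          rw [Finset.sum_range_succ' _ (n + 1)]; exact le_add_of_nonneg_right (abs_nonneg _)
      _ ≤ weightMax S b + 2 := by
          rw [Finset.sum_range_succ, Finset.sum_range_succ]; linarith

theorem abs_iterDeriv_le_distortionConst_mul (hjs : ∀ i < n, js i ≠ 0)
    (hx : x ∈ openCylSet S b n js) (hy : y ∈ openCylSet S b n js) :
    |iterDeriv S js n x| ≤ distortionConst S b * |iterDeriv S js n y| := by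
  have hbranch : ∀ i ∈ Finset.range n, |S.φd (js i).toNat (S.T^[i] x)| ≤
      Real.exp (S.K * |S.T^[i + 1] x - S.T^[i + 1] y|) * |S.φd (js i).toNat (S.T^[i] y)| :=
    fun i hi ↦ by
      have hi := Finset.mem_range.1 hi
      have hIoo := hb.interior_refIo_subset_Ioo (hjs i hi)
      simpa only [Function.iterate_succ_apply'] using S.abs_φd_le_exp_mul_abs_φd
        (hIoo (mem_openCylSet.1 hx i hi)) (hIoo (mem_openCylSet.1 hy i hi))
  calc |iterDeriv S js n x|
      ≤ ∏ i ∈ Finset.range n, Real.exp (S.K * |S.T^[i + 1] x - S.T^[i + 1] y|) *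
          |S.φd (js i).toNat (S.T^[i] y)| := by
        rw [iterDeriv, Finset.abs_prod]
        exact Finset.prod_le_prod (fun _ _ ↦ abs_nonneg _) hbranch
    _ = Real.exp (S.K * ∑ i ∈ Finset.range n, |S.T^[i + 1] x - S.T^[i + 1] y|) *
          |iterDeriv S js n y| := by
        rw [Finset.prod_mul_distrib, ← Real.exp_sum, ← Finset.mul_sum, ← Finset.abs_prod, iterDeriv]
    _ ≤ distortionConst S b * |iterDeriv S js n y| := by
        rw [distortionConst]
        gcongr
        · exact S.hK.le
        · exact hb.sum_abs_iterate_succ_sub_le hjs hx hy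

theorem volume_image_iterate_mul_le (hmn : m ≤ n) (hjs : ∀ i < n, js i ≠ 0) {B I : Set ℝ}
    (hB : B ⊆ cylSet S b n js) (hI : MapsTo S.T^[m] (cylSet S b n js) I) :
    volume (S.T^[m] '' B) * volume (cylSet S b n js) ≤
      ENNReal.ofReal (distortionConst S b) * (volume B * volume I) := by
  have hjs' : ∀ i < m, js i ≠ 0 := fun i hi ↦ hjs i (by omega)
  have hsub : openCylSet S b n js ⊆ openCylSet S b m js := openCylSet_anti hmn
  have hcount := hb.countable_cylSet_sdiff_openCylSet hjs
  have hvol : volume (openCylSet S b n js) = volume (cylSet S b n js) :=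
    measure_eq_measure_of_null_sdiff openCylSet_subset_cylSet (hcount.measure_zero volume)
  calc volume (S.T^[m] '' B) * volume (cylSet S b n js)
      = volume (S.T^[m] '' (B ∩ openCylSet S b n js)) * volume (openCylSet S b n js) := by
        rw [hvol, volume_image_inter_eq_of_countable_diff hcount hB]
    _ ≤ ENNReal.ofReal (distortionConst S b) *
          (volume (B ∩ openCylSet S b n js) * volume (S.T^[m] '' openCylSet S b n js)) :=
        volume_image_mul_volume_le (hb.isOpen_openCylSet hjs).measurableSet
          (fun x hx ↦ (hb.hasDerivAt_iterate hjs' (hsub hx)).hasDerivWithinAt)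
          ((hb.injOn_iterate hjs').mono hsub) (zero_le_one.trans hb.one_lt_distortionConst.le)
          (fun x hx y hy ↦ hb.abs_iterDeriv_le_distortionConst_mul hjs' (hsub hx) (hsub hy))
          inter_subset_right
    _ ≤ ENNReal.ofReal (distortionConst S b) * (volume B * volume I) := by
        gcongr
        · exact inter_subset_left
        · exact (hI.mono_left openCylSet_subset_cylSet).image_subset

end IsBackwardOrbit

theorem distortion_lemma_general (S : IntervalMapSetup) (b : ℕ → ℝ) (hb0 : b 0 = S.a 1)
    (hb_pos : ∀ k, 0 < b (k + 1)) (hb_lt : ∀ k, b (k + 1) < b k)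
    (hb_T : ∀ k, S.T (b (k + 1)) = b k) :
    ∃ D : ℝ, 1 < D ∧
      ∀ (n : ℕ) (js : ℕ → ℤ), (∀ k, k ≤ n → js k ≠ 0) →
        0 < volume (cylSet S b (n + 1) js) →
        ∀ B : Set ℝ, B ⊆ cylSet S b (n + 1) js →
          S.T^[n] '' B ⊆ refIo S b (js n) ∧
          volume (S.T^[n] '' B) / volume (refIo S b (js n)) ≤
            ENNReal.ofReal D * (volume B / volume (cylSet S b (n + 1) js)) ∧
          volume (S.T^[n + 1] '' B) ≤
            ENNReal.ofReal D * (volume B / volume (cylSet S b (n + 1) js)) := by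
  have hb : IsBackwardOrbit S b := ⟨hb0, hb_pos, hb_lt, hb_T⟩
  have hfin : ∀ s ⊆ Icc (0 : ℝ) 1, volume s ≠ ⊤ := fun s hs ↦
    measure_ne_top_of_subset hs measure_Icc_lt_top.ne
  refine ⟨distortionConst S b, hb.one_lt_distortionConst, fun n js hjs hpos B hB ↦ ?_⟩
  replace hjs : ∀ k < n + 1, js k ≠ 0 := fun k hk ↦ hjs k (Nat.lt_succ_iff.1 hk)
  have hn := n.lt_succ_self
  have hTn : MapsTo S.T^[n] (cylSet S b (n + 1) js) (refIo S b (js n)) :=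
    fun x hx ↦ mem_cylSet.1 hx n hn
  have hTn' : MapsTo S.T^[n + 1] (cylSet S b (n + 1) js) (Icc 0 1) :=
    fun x hx ↦ hb.iterate_mem_Icc hjs hx hn
  have hcyl := hfin _ (hb.cylSet_subset_Icc hjs)
  refine ⟨(hTn.mono_left hB).image_subset, ?_, ?_⟩
  · exact div_le_mul_div_of_mul_le_mul (hb.volume_image_iterate_mul_le hn.le hjs hB hTn) hpos.ne'
      hcyl (hb.volume_refIo_pos (hjs n hn)).ne' (hfin _ (hb.refIo_subset_Icc (hjs n hn)))
  · simpa using div_le_mul_div_of_mul_le_mul (hb.volume_image_iterate_mul_le le_rfl hjs hB hTn')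
      hpos.ne' hcyl (by simp) (by simp)

/-- Distortion Lemma: there is `D > 1` such that for every `n`, every
admissible string `(j_0, …, j_n)` of nonzero indices with a positive-measure cylinder
and at least one positive component, and every Borel `B ⊆ I_{j^{n+1}}`:
(i) `Tⁿ B ⊆ I_{j_n}`; (ii) `Leb(Tⁿ B)/Leb(I_{j_n}) ≤ D · Leb(B)/Leb(I_{j^{n+1}})`;
(iii) `Leb(T^{n+1} B) ≤ D · Leb(B)/Leb(I_{j^{n+1}})`. -/
theorem distortion_lemma (S : IntervalMapSetup) (b : ℕ → ℝ) (hb0 : b 0 = S.a 1)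
    (hb_pos : ∀ k, 0 < b (k + 1)) (hb_lt : ∀ k, b (k + 1) < b k)
    (hb_T : ∀ k, S.T (b (k + 1)) = b k) :
    ∃ D : ℝ, 1 < D ∧
      ∀ (n : ℕ) (js : ℕ → ℤ), (∀ k, k ≤ n → js k ≠ 0) →
        0 < volume (cylSet S b (n + 1) js) → (∃ k, k ≤ n ∧ 1 ≤ js k) →
        ∀ B : Set ℝ, B ⊆ cylSet S b (n + 1) js → MeasurableSet B →
          S.T^[n] '' B ⊆ refIo S b (js n) ∧
          volume (S.T^[n] '' B) / volume (refIo S b (js n)) ≤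
            ENNReal.ofReal D * (volume B / volume (cylSet S b (n + 1) js)) ∧
          volume (S.T^[n + 1] '' B) ≤
            ENNReal.ofReal D * (volume B / volume (cylSet S b (n + 1) js)) := by
  obtain ⟨D, hD, h⟩ := distortion_lemma_general S b hb0 hb_pos hb_lt hb_T
  exact ⟨D, hD, fun n js hjs hpos _ B hB _ ↦ h n js hjs hpos B hB⟩
end

section
/- Let T satisfy (A1)–(A4) with refined partition P_o. For any sequence (j_n)_{n∈ℕ} of indices in ℤ⁻ ∪ {1,2,...}, the Lebesgue measure of the cylinders shrinks to zero: lim_{n→∞} Leb(I_{(j_0, ..., j_{n-1})}) = 0. -/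
open MeasureTheory Set Filter

/-!
On each open branch interval `T` lengthens every distance `≥ ε` by at least some `δ(ε) > 0`, the
same for all branches: on `I_0` by compactness, since `φ_0' > 1` away from `0`, and on the others
because they expand by the factor `Λ`. Hence each further letter of an itinerary cuts the diameter
of the open cylinder by `δ` until it drops below `ε`, whatever the itinerary. Closed and open
cylinders differ by a countable set, and each refined cylinder lies in an unrefined one.
-/

section Itinerary

variable {X : Type*} {f : X → X} {J J' : ℕ → Set X}

/-- The points whose first `n` iterates under `f` visit `J 0, …, J (n - 1)` in this order. The
visited sets are arbitrary, so that cylinders of the original partition, of its refinement, and of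
the open branch intervals are all instances. -/
def itinerarySet (f : X → X) (J : ℕ → Set X) (n : ℕ) : Set X :=
  ⋂ k ∈ Finset.range n, f^[k] ⁻¹' J k

lemma mem_itinerarySet {n : ℕ} {x : X} : x ∈ itinerarySet f J n ↔ ∀ k < n, f^[k] x ∈ J k := by
  simp only [itinerarySet, mem_iInter, Finset.mem_range, mem_preimage]

lemma itinerarySet_succ (f : X → X) (J : ℕ → Set X) (n : ℕ) :
    itinerarySet f J (n + 1) = J 0 ∩ f ⁻¹' itinerarySet f (fun k => J (k + 1)) n := by
  ext x
  simp only [mem_inter_iff, mem_preimage, mem_itinerarySet, Nat.forall_lt_succ_left,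
    Function.iterate_zero, id_eq, Function.iterate_succ_apply]

lemma itinerarySet_mono (h : ∀ k, J k ⊆ J' k) (n : ℕ) :
    itinerarySet f J n ⊆ itinerarySet f J' n :=
  iInter₂_mono fun k _ => preimage_mono (h k)

lemma countable_itinerarySet_diff (hf : ∀ k, InjOn f (J' k)) (hJ : ∀ k, (J k \ J' k).Countable)
    (n : ℕ) : (itinerarySet f J n \ itinerarySet f J' n).Countable := by
  induction n generalizing J J' with
  | zero => simp [itinerarySet]
  | succ n ih =>
    set D := itinerarySet f (fun k => J (k + 1)) n \ itinerarySet f (fun k => J' (k + 1)) n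
    have hD : D.Countable := ih (fun k => hf (k + 1)) (fun k => hJ (k + 1))
    have hpre : (J' 0 ∩ f ⁻¹' D).Countable :=
      MapsTo.countable_of_injOn (f := f) (fun _ hx => hx.2) ((hf 0).mono inter_subset_left) hD
    refine ((hJ 0).union hpre).mono ?_
    rw [itinerarySet_succ, itinerarySet_succ]
    rintro x ⟨⟨hx, hfx⟩, hx'⟩
    by_cases h : x ∈ J' 0
    · exact .inr ⟨h, hfx, fun hfx' => hx' ⟨h, hfx'⟩⟩
    · exact .inl ⟨hx, h⟩

end Itinerary

section Expansion

variable {X : Type*} [PseudoMetricSpace X] {f : X → X} {s : Set X} {ε δ : ℝ}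

/-- On `s`, the map `f` increases by at least `δ` every distance that is at least `ε`. Unlike
expansion by a constant factor, this can hold with `δ > 0` near an indifferent fixed point. -/
def ExpandsAtScale (f : X → X) (s : Set X) (ε δ : ℝ) : Prop :=
  ∀ x ∈ s, ∀ y ∈ s, ε ≤ dist x y → dist x y + δ ≤ dist (f x) (f y)

lemma ExpandsAtScale.mono {t : Set X} {δ' : ℝ} (h : ExpandsAtScale f s ε δ) (hts : t ⊆ s)
    (hδ : δ' ≤ δ) : ExpandsAtScale f t ε δ' := fun x hx y hy hxy =>
  (add_le_add_right hδ _).trans (h x (hts hx) y (hts hy) hxy)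

lemma ExpandsAtScale.congr {g : X → X} (h : ExpandsAtScale f s ε δ) (hfg : EqOn f g s) :
    ExpandsAtScale g s ε δ := fun x hx y hy hxy => by
  rw [← hfg hx, ← hfg hy]
  exact h x hx y hy hxy

lemma expandsAtScale_of_mul_dist_le {c : ℝ} (hc : 1 ≤ c)
    (h : ∀ x ∈ s, ∀ y ∈ s, c * dist x y ≤ dist (f x) (f y)) :
    ExpandsAtScale f s ε ((c - 1) * ε) := fun x hx y hy hxy =>
  calc dist x y + (c - 1) * ε ≤ dist x y + (c - 1) * dist x y := by
        gcongr
    _ = c * dist x y := by ring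
    _ ≤ dist (f x) (f y) := h x hx y hy

lemma exists_expandsAtScale_of_isCompact (hs : IsCompact s) (hf : ContinuousOn f s)
    (h : ∀ x ∈ s, ∀ y ∈ s, 0 < dist x y → dist x y < dist (f x) (f y)) (hε : 0 < ε) :
    ∃ δ > 0, ExpandsAtScale f s ε δ := by
  have hcompact : IsCompact ((s ×ˢ s) ∩ {p : X × X | ε ≤ dist p.1 p.2}) :=
    (hs.prod hs).inter_right (isClosed_le continuous_const continuous_dist)
  have hcont : ContinuousOn (fun p : X × X => dist (f p.1) (f p.2) - dist p.1 p.2) (s ×ˢ s) :=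
    (continuous_dist.comp_continuousOn (hf.prodMap hf)).sub continuous_dist.continuousOn
  obtain ⟨δ, hδ, hmin⟩ := hcompact.exists_forall_le' (hcont.mono inter_subset_left)
    fun p hp => sub_pos.2 (h p.1 hp.1.1 p.2 hp.1.2 (hε.trans_le hp.2))
  exact ⟨δ, hδ, fun x hx y hy hxy => by linarith [hmin (x, y) ⟨⟨hx, hy⟩, hxy⟩]⟩

lemma dist_le_max_of_mem_itinerarySet_succ {J : ℕ → Set X} {D : ℝ} (hδ : 0 ≤ δ)
    (hJ : ∀ k, ExpandsAtScale f (J k) ε δ) (hD : ∀ k, ∀ x ∈ J k, ∀ y ∈ J k, dist x y ≤ D)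
    (n : ℕ) {x y : X} (hx : x ∈ itinerarySet f J (n + 1)) (hy : y ∈ itinerarySet f J (n + 1)) :
    dist x y ≤ max ε (D - n * δ) := by
  induction n generalizing J x y with
  | zero =>
    rw [itinerarySet_succ] at hx hy
    simpa using Or.inr (hD 0 x hx.1 y hy.1)
  | succ n ih =>
    rw [itinerarySet_succ] at hx hy
    have himage : dist (f x) (f y) ≤ max ε (D - n * δ) :=
      ih (fun k => hJ (k + 1)) (fun k => hD (k + 1)) hx.2 hy.2
    obtain hlt | hle := lt_or_ge (dist x y) ε
    · exact le_max_of_le_left hlt.le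
    calc dist x y ≤ dist (f x) (f y) - δ := le_sub_iff_add_le.2 (hJ 0 x hx.1 y hy.1 hle)
      _ ≤ max ε (D - n * δ) - δ := by gcongr
      _ = max (ε - δ) (D - (n + 1 : ℕ) * δ) := by
        rw [← max_sub_sub_right]
        push_cast
        ring_nf
      _ ≤ max ε (D - (n + 1 : ℕ) * δ) := by gcongr; exact sub_le_self ε hδ

end Expansion

namespace IntervalMapSetup

variable (S : IntervalMapSetup)

lemma Icc_subset_unitInterval (j : ℕ) : Icc (S.a j) (S.a (j + 1)) ⊆ Icc 0 1 :=
  Icc_subset_Icc (S.ha0 ▸ S.ha_mono.monotone j.zero_le) (S.ha_lt _).le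

lemma injOn_T (j : ℕ) : InjOn S.T (Ioo (S.a j) (S.a (j + 1))) :=
  ((S.hφ_bij j).injOn.mono Ioo_subset_Icc_self).congr fun x hx => (S.hT_eq j x hx).symm

lemma continuousOn_φ (j : ℕ) : ContinuousOn (S.φ j) (Icc (S.a j) (S.a (j + 1))) :=
  fun x hx => (S.hφ_d j x hx).continuousWithinAt

lemma exists_dist_φ_eq (j : ℕ) {x y : ℝ} (hx : x ∈ Icc (S.a j) (S.a (j + 1)))
    (hy : y ∈ Icc (S.a j) (S.a (j + 1))) (hne : x ≠ y) :
    ∃ c ∈ Ioo (S.a j) (S.a (j + 1)), dist (S.φ j x) (S.φ j y) = |S.φd j c| * dist x y := by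
  wlog hxy : x < y generalizing x y
  · simpa only [dist_comm] using this hy hx hne.symm (hne.lt_or_gt.resolve_left hxy)
  have hsub : Ioo x y ⊆ Ioo (S.a j) (S.a (j + 1)) := Ioo_subset_Ioo hx.1 hy.2
  obtain ⟨c, hc, hslope⟩ := exists_hasDerivAt_eq_slope (S.φ j) (S.φd j) hxy
    ((S.continuousOn_φ j).mono (Icc_subset_Icc hx.1 hy.2))
    (fun z hz => (S.hφ_d j z (Ioo_subset_Icc_self (hsub hz))).hasDerivAt
      (Icc_mem_nhds (hsub hz).1 (hsub hz).2))
  refine ⟨c, hsub hc, ?_⟩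
  rw [dist_comm, dist_comm x, Real.dist_eq, Real.dist_eq, ← abs_mul, hslope,
    div_mul_cancel₀ _ (sub_pos.2 hxy).ne']

lemma dist_lt_dist_φ_zero {x y : ℝ} (hx : x ∈ Icc (S.a 0) (S.a 1)) (hy : y ∈ Icc (S.a 0) (S.a 1))
    (hxy : 0 < dist x y) : dist x y < dist (S.φ 0 x) (S.φ 0 y) := by
  obtain ⟨c, hc, heq⟩ := S.exists_dist_φ_eq 0 hx hy (dist_pos.1 hxy)
  have hderiv : 1 < S.φd 0 c := S.hA4_exp c (S.ha0 ▸ hc.1) hc.2.le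
  rw [heq]
  exact lt_mul_of_one_lt_left hxy (hderiv.trans_le (le_abs_self _))

lemma mul_dist_le_dist_φ {j : ℕ} (hj : 1 ≤ j) {x y : ℝ} (hx : x ∈ Icc (S.a j) (S.a (j + 1)))
    (hy : y ∈ Icc (S.a j) (S.a (j + 1))) : S.Λ * dist x y ≤ dist (S.φ j x) (S.φ j y) := by
  obtain rfl | hne := eq_or_ne x y
  · simp only [dist_self, mul_zero, le_refl]
  obtain ⟨c, hc, heq⟩ := S.exists_dist_φ_eq j hx hy hne
  rw [heq]
  gcongr
  exact S.hA2 j hj c (Ioo_subset_Icc_self hc)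

lemma exists_expandsAtScale_φ {ε : ℝ} (hε : 0 < ε) :
    ∃ δ > 0, ∀ j, ExpandsAtScale (S.φ j) (Icc (S.a j) (S.a (j + 1))) ε δ := by
  obtain ⟨δ, hδ, hzero⟩ := exists_expandsAtScale_of_isCompact isCompact_Icc (S.continuousOn_φ 0)
    (fun _ hx _ hy => S.dist_lt_dist_φ_zero hx hy) hε
  refine ⟨min δ ((S.Λ - 1) * ε), lt_min hδ (mul_pos (sub_pos.2 S.hΛ) hε), fun j => ?_⟩
  obtain rfl | hj := j.eq_zero_or_pos
  · exact hzero.mono Subset.rfl (min_le_left _ _)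
  · exact (expandsAtScale_of_mul_dist_le S.hΛ.le
      fun _ hx _ hy => S.mul_dist_le_dist_φ hj hx hy).mono Subset.rfl (min_le_right _ _)

lemma exists_expandsAtScale_T {ε : ℝ} (hε : 0 < ε) :
    ∃ δ > 0, ∀ j, ExpandsAtScale S.T (Ioo (S.a j) (S.a (j + 1))) ε δ := by
  obtain ⟨δ, hδ, h⟩ := S.exists_expandsAtScale_φ hε
  exact ⟨δ, hδ, fun j => ((h j).mono Ioo_subset_Icc_self le_rfl).congr
    fun x hx => (S.hT_eq j x hx).symm⟩

/-- The cylinder `I_{i_0} ∩ T⁻¹ I_{i_1} ∩ ⋯ ∩ T^{-(n-1)} I_{i_{n-1}}` of the original partition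
`I_i = [a_i, a_{i+1}]`, before `I_0` is refined. -/
def cylinder (n : ℕ) (i : ℕ → ℕ) : Set ℝ :=
  itinerarySet S.T (fun k => Icc (S.a (i k)) (S.a (i k + 1))) n

/-- The variant of `IntervalMapSetup.cylinder` built from the open intervals `(a_i, a_{i+1})`, on
which `T` agrees with its branches; at the partition points `T` is arbitrary. -/
def openCylinder (n : ℕ) (i : ℕ → ℕ) : Set ℝ :=
  itinerarySet S.T (fun k => Ioo (S.a (i k)) (S.a (i k + 1))) n

lemma countable_cylinder_diff_openCylinder (n : ℕ) (i : ℕ → ℕ) :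
    (S.cylinder n i \ S.openCylinder n i).Countable := by
  refine countable_itinerarySet_diff (fun k => S.injOn_T (i k)) (fun k => ?_) n
  rw [Icc_sdiff_Ioo_same (S.ha_mono (i k).lt_succ_self).le]
  exact (toFinite _).countable

lemma volume_cylinder_le_ediam_openCylinder (n : ℕ) (i : ℕ → ℕ) :
    volume (S.cylinder n i) ≤ Metric.ediam (S.openCylinder n i) :=
  (measure_mono_ae (ae_le_set.2
    ((S.countable_cylinder_diff_openCylinder n i).measure_zero volume))).trans
    (Real.volume_le_diam _)

lemma ediam_openCylinder_succ_le {ε δ : ℝ} (hδ : 0 ≤ δ)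
    (h : ∀ j, ExpandsAtScale S.T (Ioo (S.a j) (S.a (j + 1))) ε δ) (n : ℕ) (i : ℕ → ℕ) :
    Metric.ediam (S.openCylinder (n + 1) i) ≤ ENNReal.ofReal (max ε (1 - n * δ)) := by
  have hunit (j : ℕ) : Ioo (S.a j) (S.a (j + 1)) ⊆ Icc 0 1 :=
    Ioo_subset_Icc_self.trans (S.Icc_subset_unitInterval j)
  refine Metric.ediam_le fun x hx y hy => ?_
  rw [edist_dist]
  exact ENNReal.ofReal_le_ofReal (dist_le_max_of_mem_itinerarySet_succ hδ (fun k => h (i k))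
    (fun k _ hu _ hv => Real.dist_le_of_mem_Icc_01 (hunit (i k) hu) (hunit (i k) hv)) n hx hy)

end IntervalMapSetup

lemma refIo_subset_Icc (S : IntervalMapSetup) {b : ℕ → ℝ} (hb : ∀ k, b k ∈ Icc 0 (S.a 1))
    (j : ℤ) : refIo S b j ⊆ Icc (S.a j.toNat) (S.a (j.toNat + 1)) := by
  unfold refIo
  split_ifs with hj
  · exact Subset.rfl
  · rw [Int.toNat_of_nonpos (show j ≤ 0 by lia), S.ha0]
    exact Icc_subset_Icc (hb _).1 (hb _).2

lemma cylSet_subset_cylinder (S : IntervalMapSetup) {b : ℕ → ℝ} (hb : ∀ k, b k ∈ Icc 0 (S.a 1))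
    (n : ℕ) (js : ℕ → ℤ) : cylSet S b n js ⊆ S.cylinder n (fun k => (js k).toNat) :=
  itinerarySet_mono (fun k => refIo_subset_Icc S hb (js k)) n

lemma volume_cylSet_le_iSup (S : IntervalMapSetup) {b : ℕ → ℝ} (hb : ∀ k, b k ∈ Icc 0 (S.a 1))
    (n : ℕ) (js : ℕ → ℤ) : volume (cylSet S b n js) ≤ ⨆ i : ℕ → ℕ, volume (S.cylinder n i) :=
  (measure_mono (cylSet_subset_cylinder S hb n js)).trans
    (le_iSup (fun i => volume (S.cylinder n i)) _)

theorem cylinders_shrink_general (S : IntervalMapSetup) :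
    Tendsto (fun n => ⨆ i : ℕ → ℕ, volume (S.cylinder n i)) atTop (nhds 0) := by
  rw [← tendsto_add_atTop_iff_nat 1, ENNReal.tendsto_nhds_zero]
  intro η hη
  obtain ⟨ε, hε, hεη⟩ := ENNReal.lt_iff_exists_nnreal_btwn.1 hη
  obtain ⟨δ, hδ, hexpand⟩ := S.exists_expandsAtScale_T (NNReal.coe_pos.2 (ENNReal.coe_pos.1 hε))
  filter_upwards [tendsto_natCast_atTop_atTop.eventually_ge_atTop (1 / δ)] with n hn
  have hbound : max (ε : ℝ) (1 - n * δ) = ε :=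
    max_eq_left ((sub_nonpos.2 ((div_le_iff₀ hδ).1 hn)).trans ε.coe_nonneg)
  refine iSup_le fun i => ?_
  calc volume (S.cylinder (n + 1) i)
      ≤ Metric.ediam (S.openCylinder (n + 1) i) := S.volume_cylinder_le_ediam_openCylinder _ i
    _ ≤ ENNReal.ofReal (max ε (1 - n * δ)) := S.ediam_openCylinder_succ_le hδ.le hexpand n i
    _ = ε := by rw [hbound, ENNReal.ofReal_coe_nnreal]
    _ ≤ η := hεη.le

/-- for any sequence of nonzero indices, the Lebesgue measure of the
cylinders `I_{(j_0, …, j_{n-1})}` tends to zero. -/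
theorem cylinders_shrink (S : IntervalMapSetup) (b : ℕ → ℝ) (hb0 : b 0 = S.a 1)
    (hb_pos : ∀ k, 0 < b (k + 1)) (hb_lt : ∀ k, b (k + 1) < b k)
    (hb_T : ∀ k, S.T (b (k + 1)) = b k) :
    ∀ js : ℕ → ℤ, (∀ n, js n ≠ 0) →
      Tendsto (fun n => volume (cylSet S b n js)) atTop (nhds 0) := by
  intro js _
  have hb (k : ℕ) : b k ∈ Icc 0 (S.a 1) := ⟨(hb_pos k).le.trans (hb_lt k).le,
    hb0 ▸ antitone_nat_of_succ_le (fun l => (hb_lt l).le) k.zero_le⟩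
  exact tendsto_of_tendsto_of_tendsto_of_le_of_le tendsto_const_nhds (cylinders_shrink_general S)
    (fun _ => zero_le) fun n => volume_cylSet_le_iSup S hb n js
end

section
/- Let T satisfy (A1)–(A4), let (b_k) be the backward orbit of a_1 in I_0 (b_0 = a_1, T(b_{k+1}) = b_k, b_{k+1} < b_k), and set α := 1/(β+1). Then there exist constants 0 < κ₁ < κ₂ such that for all k ≥ 1: κ₁ k^{-α} ≤ b_k ≤ κ₂ k^{-α}, and κ₁ b_k^{β+2} ≤ b_{k-1} - b_k ≤ κ₂ b_k^{β+2} (so in particular b_{k-1} - b_k is comparable to k^{-(α+1)}). -/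
open MeasureTheory Set Filter

/-!
Near an indifferent fixed point with `f'' x ≍ x ^ β`, two integrations give
`f x - x ≍ x ^ (β + 2)`, so a backward orbit satisfies `b_k - b_{k+1} ≍ b_{k+1} ^ (p + 1)` with
`p = β + 1`. This is a discretisation of `y' = -y ^ (p + 1)`, which the coordinate `y ↦ y ^ (-p)`
linearises: by the mean value theorem `b_k ^ (-p)` has increments bounded above and away from zero,
whence `b_k ^ (-p) ≍ k`.
-/

section Integration

variable {A β c c₁ c₂ q : ℝ} {f f' f'' : ℝ → ℝ}

theorem div_mul_rpow_le_of_mul_rpow_le_deriv (hq : 0 < q) (hf : ContinuousOn f (Icc 0 A))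
    (hf' : ∀ x ∈ Ioo 0 A, HasDerivAt f (f' x) x) (hf0 : 0 ≤ f 0)
    (hle : ∀ x ∈ Ioo 0 A, c * x ^ (q - 1) ≤ f' x) {x : ℝ} (hx : x ∈ Icc 0 A) :
    c / q * x ^ q ≤ f x := by
  have hmono : MonotoneOn (fun y ↦ f y - c / q * y ^ q) (Icc 0 A) := by
    refine monotoneOn_of_hasDerivWithinAt_nonneg (f' := fun y ↦ f' y - c / q * (q * y ^ (q - 1)))
      (convex_Icc 0 A) ?_ ?_ ?_
    · exact hf.sub (continuousOn_const.mul (Real.continuous_rpow_const hq.le).continuousOn)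
    · rw [interior_Icc]
      intro y hy
      exact ((hf' y hy).sub
        ((Real.hasDerivAt_rpow_const (Or.inl hy.1.ne')).const_mul _)).hasDerivWithinAt
    · rw [interior_Icc]
      intro y hy
      rw [← mul_assoc, div_mul_cancel₀ c hq.ne']
      exact sub_nonneg.2 (hle y hy)
  have h := hmono (left_mem_Icc.2 (hx.1.trans hx.2)) hx hx.1
  simp only [Real.zero_rpow hq.ne', mul_zero, sub_zero] at h
  linarith

theorem div_mul_rpow_le_of_mul_rpow_le_deriv2 (hβ : -1 < β) (hf : ContinuousOn f (Icc 0 A))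
    (hf' : ∀ x ∈ Ioo 0 A, HasDerivAt f (f' x) x) (hf'_cont : ContinuousOn f' (Icc 0 A))
    (hf'' : ∀ x ∈ Ioo 0 A, HasDerivAt f' (f'' x) x) (hf0 : 0 ≤ f 0) (hf'0 : 0 ≤ f' 0)
    (hle : ∀ x ∈ Ioo 0 A, c * x ^ β ≤ f'' x) {x : ℝ} (hx : x ∈ Icc 0 A) :
    c / ((β + 1) * (β + 2)) * x ^ (β + 2) ≤ f x := by
  have hderiv : ∀ y ∈ Icc 0 A, c / (β + 1) * y ^ (β + 1) ≤ f' y := fun y hy ↦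
    div_mul_rpow_le_of_mul_rpow_le_deriv (by linarith) hf'_cont hf'' hf'0
      (by simpa only [add_sub_cancel_right] using hle) hy
  rw [← div_div]
  refine div_mul_rpow_le_of_mul_rpow_le_deriv (by linarith) hf hf' hf0 (fun y hy ↦ ?_) hx
  rw [show β + 2 - 1 = β + 1 by ring]
  exact hderiv y (Ioo_subset_Icc_self hy)

theorem sub_id_mem_Icc_of_deriv2_mem_Icc (hβ : -1 < β) (hf : ContinuousOn f (Icc 0 A))
    (hf' : ∀ x ∈ Ioo 0 A, HasDerivAt f (f' x) x) (hf'_cont : ContinuousOn f' (Icc 0 A))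
    (hf'' : ∀ x ∈ Ioo 0 A, HasDerivAt f' (f'' x) x) (hf0 : f 0 = 0) (hf'0 : f' 0 = 1)
    (hbound : ∀ x ∈ Ioo 0 A, f'' x ∈ Icc (c₁ * x ^ β) (c₂ * x ^ β)) {x : ℝ} (hx : x ∈ Icc 0 A) :
    f x - x ∈ Icc (c₁ / ((β + 1) * (β + 2)) * x ^ (β + 2))
      (c₂ / ((β + 1) * (β + 2)) * x ^ (β + 2)) := by
  constructor
  · exact div_mul_rpow_le_of_mul_rpow_le_deriv2 (f := fun y ↦ f y - y) hβ (hf.sub continuousOn_id)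
      (fun y hy ↦ (hf' y hy).sub (hasDerivAt_id y)) (hf'_cont.sub continuousOn_const)
      (fun y hy ↦ (hf'' y hy).sub_const 1) (by simp [hf0]) (by simp [hf'0])
      (fun y hy ↦ (hbound y hy).1) hx
  · have h := div_mul_rpow_le_of_mul_rpow_le_deriv2 (f := fun y ↦ y - f y) (c := -c₂) hβ
      (continuousOn_id.sub hf) (fun y hy ↦ (hasDerivAt_id y).sub (hf' y hy))
      (continuousOn_const.sub hf'_cont) (fun y hy ↦ (hf'' y hy).const_sub 1)
      (by simp [hf0]) (by simp [hf'0])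
      (fun y hy ↦ by linarith [(hbound y hy).2]) hx
    rw [neg_div, neg_mul] at h
    linarith

end Integration

section Recursion

variable {p d₁ d₂ : ℝ}

theorem rpow_neg_sub_rpow_neg_mem_Icc {x y : ℝ} (hp : 0 ≤ p) (hx : 0 < x) (hxy : x < y) :
    x ^ (-p) - y ^ (-p) ∈
      Icc (p * y ^ (-(p + 1)) * (y - x)) (p * x ^ (-(p + 1)) * (y - x)) := by
  have hderiv : ∀ z, 0 < z → HasDerivAt (fun z : ℝ ↦ z ^ (-p)) (-p * z ^ (-p - 1)) z :=
    fun z hz ↦ Real.hasDerivAt_rpow_const (Or.inl hz.ne')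
  obtain ⟨z, ⟨hxz, hzy⟩, hz⟩ := exists_hasDerivAt_eq_slope _ _ hxy
    (fun z hz ↦ (hderiv z (hx.trans_le hz.1)).continuousAt.continuousWithinAt)
    (fun z hz ↦ hderiv z (hx.trans hz.1))
  have hyx : 0 < y - x := sub_pos.2 hxy
  have hmvt : x ^ (-p) - y ^ (-p) = p * z ^ (-(p + 1)) * (y - x) := by
    rw [eq_div_iff hyx.ne', ← neg_add'] at hz
    linarith
  have hexp : -(p + 1) ≤ 0 := by linarith
  rw [hmvt]
  constructor <;> gcongr ?_ * ?_ * _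
  · exact Real.rpow_le_rpow_of_nonpos (hx.trans hxz) hzy.le hexp
  · exact Real.rpow_le_rpow_of_nonpos hx hxz.le hexp

theorem rpow_neg_sub_rpow_neg_mem_Icc_of_sub_mem_Icc {A x y : ℝ} (hp : 0 ≤ p) (hd₁ : 0 < d₁)
    (hd₂ : 0 ≤ d₂) (hx : 0 < x) (hxA : x ≤ A)
    (hyx : y - x ∈ Icc (d₁ * x ^ (p + 1)) (d₂ * x ^ (p + 1))) :
    x ^ (-p) - y ^ (-p) ∈ Icc (p * d₁ * (1 + d₂ * A ^ p) ^ (-(p + 1))) (p * d₂) := by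
  have hxy : x < y := sub_pos.1 ((by positivity : 0 < d₁ * x ^ (p + 1)).trans_le hyx.1)
  have hcancel : x ^ (-(p + 1)) * x ^ (p + 1) = 1 := by
    rw [← Real.rpow_add hx, neg_add_cancel, Real.rpow_zero]
  obtain ⟨hlow, hup⟩ := rpow_neg_sub_rpow_neg_mem_Icc hp hx hxy
  constructor
  · set C := 1 + d₂ * A ^ p
    have hC : 0 ≤ C := add_nonneg zero_le_one
      (mul_nonneg hd₂ (Real.rpow_nonneg (hx.le.trans hxA) p))
    have hyC : y ≤ C * x := by
      calc y ≤ x + d₂ * x ^ (p + 1) := by linarith [hyx.2]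
        _ = (1 + d₂ * x ^ p) * x := by rw [Real.rpow_add_one hx.ne']; ring
        _ ≤ C * x := by dsimp only [C]; gcongr
    have hrpow : (C * x) ^ (-(p + 1)) ≤ y ^ (-(p + 1)) :=
      Real.rpow_le_rpow_of_nonpos (hx.trans hxy) hyC (by linarith)
    calc p * d₁ * C ^ (-(p + 1))
        = p * (C ^ (-(p + 1)) * x ^ (-(p + 1))) * (d₁ * x ^ (p + 1)) := by
          linear_combination (-p * d₁ * C ^ (-(p + 1))) * hcancel
      _ = p * (C * x) ^ (-(p + 1)) * (d₁ * x ^ (p + 1)) := by rw [Real.mul_rpow hC hx.le]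
      _ ≤ p * y ^ (-(p + 1)) * (y - x) := by
          have hy := hx.trans hxy
          have hyx₁ := hyx.1
          gcongr
      _ ≤ x ^ (-p) - y ^ (-p) := hlow
  · calc x ^ (-p) - y ^ (-p) ≤ p * x ^ (-(p + 1)) * (y - x) := hup
      _ ≤ p * x ^ (-(p + 1)) * (d₂ * x ^ (p + 1)) := by gcongr; exact hyx.2
      _ = p * d₂ := by linear_combination p * d₂ * hcancel

theorem mem_Icc_mul_natCast_of_sub_mem_Icc {u : ℕ → ℝ} {m M : ℝ} (hu0 : 0 ≤ u 0)
    (hu : ∀ k, u (k + 1) - u k ∈ Icc m M) {k : ℕ} (hk : 1 ≤ k) :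
    u k ∈ Icc (m * k) ((u 0 + M) * k) := by
  have hlow : Monotone fun k : ℕ ↦ u k - m * k :=
    monotone_nat_of_le_succ fun k ↦ by push_cast; linarith [(hu k).1]
  have hup : Antitone fun k : ℕ ↦ u k - M * k :=
    antitone_nat_of_succ_le fun k ↦ by push_cast; linarith [(hu k).2]
  have hlow0 := hlow k.zero_le
  have hup0 := hup k.zero_le
  have hu0k : u 0 ≤ u 0 * k := le_mul_of_one_le_right hu0 (by exact_mod_cast hk)
  simp only [Nat.cast_zero, mul_zero, sub_zero] at hlow0 hup0
  constructor <;> linarith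

theorem exists_rpow_neg_mem_Icc_of_sub_mem_Icc {b : ℕ → ℝ} (hp : 0 < p) (hd₁ : 0 < d₁)
    (hb : ∀ k, 0 < b k)
    (hsub : ∀ k, b k - b (k + 1) ∈ Icc (d₁ * b (k + 1) ^ (p + 1)) (d₂ * b (k + 1) ^ (p + 1))) :
    ∃ m M : ℝ, 0 < m ∧ 0 < M ∧ ∀ k : ℕ, 1 ≤ k → b k ^ (-p) ∈ Icc (m * k) (M * k) := by
  have hd₂ : 0 < d₂ := hd₁.trans_le <|
    le_of_mul_le_mul_right ((hsub 0).1.trans (hsub 0).2) (Real.rpow_pos_of_pos (hb 1) _)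
  have hanti : Antitone b := antitone_nat_of_succ_le fun k ↦
    sub_nonneg.1 ((mul_nonneg hd₁.le (Real.rpow_nonneg (hb _).le _)).trans (hsub k).1)
  have hb0 := hb 0
  exact ⟨p * d₁ * (1 + d₂ * b 0 ^ p) ^ (-(p + 1)), b 0 ^ (-p) + p * d₂,
    by positivity, by positivity, fun k hk ↦
    mem_Icc_mul_natCast_of_sub_mem_Icc (u := fun k ↦ b k ^ (-p)) (by positivity)
      (fun k ↦ rpow_neg_sub_rpow_neg_mem_Icc_of_sub_mem_Icc hp.le hd₁ hd₂.le (hb _)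
        (hanti (k + 1).zero_le) (hsub k)) hk⟩

theorem exists_mem_Icc_mul_rpow_of_sub_mem_Icc {b : ℕ → ℝ} (hp : 0 < p) (hd₁ : 0 < d₁)
    (hb : ∀ k, 0 < b k)
    (hsub : ∀ k, b k - b (k + 1) ∈ Icc (d₁ * b (k + 1) ^ (p + 1)) (d₂ * b (k + 1) ^ (p + 1))) :
    ∃ κ₁ κ₂ : ℝ, 0 < κ₁ ∧
      ∀ k : ℕ, 1 ≤ k → b k ∈ Icc (κ₁ * (k : ℝ) ^ (-(1 / p))) (κ₂ * (k : ℝ) ^ (-(1 / p))) := by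
  obtain ⟨m, M, hm, hM, hbk⟩ := exists_rpow_neg_mem_Icc_of_sub_mem_Icc hp hd₁ hb hsub
  refine ⟨M ^ (-(1 / p)), m ^ (-(1 / p)), Real.rpow_pos_of_pos hM _, fun k hk ↦ ?_⟩
  have hk0 : (0 : ℝ) < k := by exact_mod_cast hk
  have hp' : -p < 0 := neg_lt_zero.2 hp
  rw [← Real.mul_rpow hM.le hk0.le, ← Real.mul_rpow hm.le hk0.le, one_div, ← inv_neg]
  exact ⟨(Real.rpow_inv_le_iff_of_neg (by positivity) (hb k) hp').2 (hbk k hk).2,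
    (Real.le_rpow_inv_iff_of_neg (hb k) (by positivity) hp').2 (hbk k hk).1⟩

end Recursion

theorem b_asymptotics_general {A β c₁ c₂ : ℝ} {f f' f'' : ℝ → ℝ} {b : ℕ → ℝ}
    (hβ : -1 < β) (hc₁ : 0 < c₁)
    (hf : ContinuousOn f (Icc 0 A)) (hf' : ∀ x ∈ Ioo 0 A, HasDerivAt f (f' x) x)
    (hf'_cont : ContinuousOn f' (Icc 0 A)) (hf'' : ∀ x ∈ Ioo 0 A, HasDerivAt f' (f'' x) x)
    (hf0 : f 0 = 0) (hf'0 : f' 0 = 1)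
    (hbound : ∀ x ∈ Ioo 0 A, f'' x ∈ Icc (c₁ * x ^ β) (c₂ * x ^ β))
    (hb : ∀ k, b k ∈ Ioc 0 A) (hfb : ∀ k, f (b (k + 1)) = b k) :
    ∃ κ₁ κ₂ : ℝ, 0 < κ₁ ∧ κ₁ < κ₂ ∧
      ∀ k : ℕ, 1 ≤ k →
        (κ₁ * (k : ℝ) ^ (-(1 / (β + 1))) ≤ b k ∧ b k ≤ κ₂ * (k : ℝ) ^ (-(1 / (β + 1)))) ∧
        (κ₁ * b k ^ (β + 2) ≤ b (k - 1) - b k ∧ b (k - 1) - b k ≤ κ₂ * b k ^ (β + 2)) := by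
  have hp : 0 < β + 1 := by linarith
  set d₁ := c₁ / ((β + 1) * (β + 2))
  set d₂ := c₂ / ((β + 1) * (β + 2))
  have hd₁ : 0 < d₁ := div_pos hc₁ (mul_pos hp (by linarith))
  have hsub (k : ℕ) : b k - b (k + 1) ∈
      Icc (d₁ * b (k + 1) ^ (β + 2)) (d₂ * b (k + 1) ^ (β + 2)) := by
    simpa only [hfb] using sub_id_mem_Icc_of_deriv2_mem_Icc hβ hf hf' hf'_cont hf'' hf0 hf'0 hbound
      (Ioc_subset_Icc_self (hb (k + 1)))
  obtain ⟨κ₁, κ₂, hκ₁, hκ⟩ := exists_mem_Icc_mul_rpow_of_sub_mem_Icc hp hd₁ (fun k ↦ (hb k).1)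
    (by simpa only [add_assoc, one_add_one_eq_two] using hsub)
  refine ⟨min κ₁ d₁, max (max κ₂ d₂) (d₁ + 1), lt_min hκ₁ hd₁,
    (min_le_right _ _).trans_lt ((lt_add_one d₁).trans_le (le_max_right _ _)), ?_⟩
  rintro (_ | k) hk
  · contradiction
  have hb_pow : 0 ≤ b (k + 1) ^ (β + 2) := Real.rpow_nonneg (hb _).1.le _
  rw [Nat.add_sub_cancel]
  refine ⟨⟨le_trans ?_ (hκ _ hk).1, (hκ _ hk).2.trans ?_⟩,
    le_trans ?_ (hsub k).1, (hsub k).2.trans ?_⟩ <;> gcongr <;> simp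

/-- with `α = 1/(β+1)`, there are `0 < κ₁ < κ₂` with
`κ₁ k^{-α} ≤ b_k ≤ κ₂ k^{-α}` and `κ₁ b_k^{β+2} ≤ b_{k-1} - b_k ≤ κ₂ b_k^{β+2}`
for all `k ≥ 1`. -/
theorem b_asymptotics (S : IntervalMapSetup) (b : ℕ → ℝ) (hb0 : b 0 = S.a 1)
    (hb_pos : ∀ k, 0 < b (k + 1)) (hb_lt : ∀ k, b (k + 1) < b k)
    (hb_T : ∀ k, S.T (b (k + 1)) = b k) :
    ∃ κ₁ κ₂ : ℝ, 0 < κ₁ ∧ κ₁ < κ₂ ∧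
      ∀ k : ℕ, 1 ≤ k →
        (κ₁ * (k : ℝ) ^ (-(1 / (S.β + 1))) ≤ b k ∧
          b k ≤ κ₂ * (k : ℝ) ^ (-(1 / (S.β + 1)))) ∧
        (κ₁ * b k ^ (S.β + 2) ≤ b (k - 1) - b k ∧
          b (k - 1) - b k ≤ κ₂ * b k ^ (S.β + 2)) := by
  have hφ := S.hφ_d 0
  have hφd := S.hφ_dd 0
  simp only [S.ha0, zero_add] at hφ hφd
  have hb (k : ℕ) : b k ∈ Ioc 0 (S.a 1) :=
    ⟨(hb_pos k).trans (hb_lt k), hb0 ▸ antitone_nat_of_succ_le (fun k ↦ (hb_lt k).le) k.zero_le⟩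
  refine b_asymptotics_general (by linarith [S.hβ]) S.hc₁
    (fun x hx ↦ (hφ x hx).continuousWithinAt)
    (fun x hx ↦ (hφ x (Ioo_subset_Icc_self hx)).hasDerivAt (Icc_mem_nhds hx.1 hx.2))
    (fun x hx ↦ (hφd x hx).continuousWithinAt)
    (fun x hx ↦ (hφd x (Ioo_subset_Icc_self hx)).hasDerivAt (Icc_mem_nhds hx.1 hx.2))
    S.hA4_fix S.hA4_d1 S.hA4_dd hb fun k ↦ ?_
  rw [← hb_T k, S.hT_eq 0 _ ⟨S.ha0 ▸ hb_pos k, (hb_lt k).trans_le (hb k).2⟩]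
end
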